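/- arXiv:1610.04800 — 14 statements merged into one kernel-verified Lean document; each statement's English description precedes it below -/
import Mathlib

section
/- For any topological space X, the following are equivalent: (i) X is selectively separable, i.e., for every sequence (D_n)_{n<ω} of dense subsets of X there exist finite sets E_n ⊆ D_n such that ⋃_{n<ω} E_n is dense in X; (ii) X is separable and has countable dense fan tightness at every point x ∈ X; (iii) X has a countable dense subset D such that X has countable dense fan tightness at every point x ∈ D. -/
open TopologicalSpace Cardinal

/-- Player II has a winning (perfect-information) strategy in the selection game
`G_fin(𝒜, ℬ)`: during round `n`, Player I plays `A n ∈ 𝒜` and II responds with a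
finite subset of `A n` depending on `⟨A 0, …, A n⟩`; II wins iff the union of
its selections lies in `ℬ`. -/
def WinStratFin {X : Type*} (𝒜 ℬ : Set (Set X)) : Prop :=
  ∃ σ : (n : ℕ) → (Fin (n + 1) → Set X) → Set X,
    (∀ (n : ℕ) (s : Fin (n + 1) → Set X), (∀ i, s i ∈ 𝒜) →
      (σ n s).Finite ∧ σ n s ⊆ s (Fin.last n)) ∧
    ∀ A : ℕ → Set X, (∀ n, A n ∈ 𝒜) →
      (⋃ n : ℕ, σ n (fun i => A i)) ∈ ℬ

/-- Player II has a winning Markov strategy in `G_fin(𝒜, ℬ)`: its finite selection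
from `A n` depends only on `A n` and the round number `n`. -/
def WinMarkovFin {X : Type*} (𝒜 ℬ : Set (Set X)) : Prop :=
  ∃ σ : Set X → ℕ → Set X,
    (∀ A ∈ 𝒜, ∀ n : ℕ, (σ A n).Finite ∧ σ A n ⊆ A) ∧
    ∀ A : ℕ → Set X, (∀ n, A n ∈ 𝒜) → (⋃ n : ℕ, σ (A n) n) ∈ ℬ

/-- Player II has a winning (perfect-information) strategy in the strong selection
game `G_1(𝒜, ℬ)`: during round `n`, Player I plays `A n ∈ 𝒜` and II responds with a
single element of `A n` depending on `⟨A 0, …, A n⟩`; II wins iff the set of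
its selections lies in `ℬ`. -/
def WinStratOne {X : Type*} (𝒜 ℬ : Set (Set X)) : Prop :=
  ∃ σ : (n : ℕ) → (Fin (n + 1) → Set X) → X,
    (∀ (n : ℕ) (s : Fin (n + 1) → Set X), (∀ i, s i ∈ 𝒜) →
      σ n s ∈ s (Fin.last n)) ∧
    ∀ A : ℕ → Set X, (∀ n, A n ∈ 𝒜) →
      {x | ∃ n : ℕ, x = σ n (fun i => A i)} ∈ ℬ

/-- Player II has a winning Markov strategy in `G_1(𝒜, ℬ)`. -/
def WinMarkovOne {X : Type*} (𝒜 ℬ : Set (Set X)) : Prop :=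
  ∃ σ : Set X → ℕ → X,
    (∀ A ∈ 𝒜, ∀ n : ℕ, σ A n ∈ A) ∧
    ∀ A : ℕ → Set X, (∀ n, A n ∈ 𝒜) → {x | ∃ n : ℕ, x = σ (A n) n} ∈ ℬ

/-- `𝒟_X`: the collection of dense subsets of `X`. -/
def denseFamily (X : Type*) [TopologicalSpace X] : Set (Set X) := {D | Dense D}

/-- `ℬ_{X,x}`: the collection of subsets of `X` having `x` in their closure. -/
def blades (X : Type*) [TopologicalSpace X] (x : X) : Set (Set X) :=
  {A | x ∈ closure A}

/-- An ω-cover of `X`: an open cover such that every finite subset of `X` is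
contained in some member. -/
def IsOmegaCover {X : Type*} [TopologicalSpace X] (𝒰 : Set (Set X)) : Prop :=
  (∀ U ∈ 𝒰, IsOpen U) ∧ (⋃₀ 𝒰 = Set.univ) ∧
    ∀ F : Set X, F.Finite → ∃ U ∈ 𝒰, F ⊆ U

/-- `Ω_X`: the collection of ω-covers of `X`. -/
def omegaCovers (X : Type*) [TopologicalSpace X] : Set (Set (Set X)) :=
  {𝒰 | IsOmegaCover 𝒰}

/-- `𝒪_X`: the collection of open covers of `X`. -/
def openCovers (X : Type*) [TopologicalSpace X] : Set (Set (Set X)) :=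
  {𝒰 | (∀ U ∈ 𝒰, IsOpen U) ∧ ⋃₀ 𝒰 = Set.univ}

/-- `C_p(X)`: continuous real-valued functions on `X` with the topology of
pointwise convergence (subspace of the product `ℝ^X`). -/
abbrev Cp (X : Type*) [TopologicalSpace X] : Type _ := {f : X → ℝ // Continuous f}

/-- Countable fan tightness of `Y` at `y`. -/
def CFTat (Y : Type*) [TopologicalSpace Y] (y : Y) : Prop :=
  ∀ A : ℕ → Set Y, (∀ n, y ∈ closure (A n)) →
    ∃ B : ℕ → Set Y, (∀ n, (B n).Finite ∧ B n ⊆ A n) ∧ y ∈ closure (⋃ n, B n)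

/-- Countable dense fan tightness of `Y` at `y`. -/
def CDFTat (Y : Type*) [TopologicalSpace Y] (y : Y) : Prop :=
  ∀ A : ℕ → Set Y, (∀ n, Dense (A n)) →
    ∃ B : ℕ → Set Y, (∀ n, (B n).Finite ∧ B n ⊆ A n) ∧ y ∈ closure (⋃ n, B n)

/-- Selective separability of `X`. -/
def SelSep (X : Type*) [TopologicalSpace X] : Prop :=
  ∀ D : ℕ → Set X, (∀ n, Dense (D n)) →
    ∃ E : ℕ → Set X, (∀ n, (E n).Finite ∧ E n ⊆ D n) ∧ Dense (⋃ n, E n)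

/-- The Ω-Menger selection principle `S_fin(Ω_X, Ω_X)`. -/
def OmegaMenger (X : Type*) [TopologicalSpace X] : Prop :=
  ∀ 𝒰 : ℕ → Set (Set X), (∀ n, 𝒰 n ∈ omegaCovers X) →
    ∃ ℱ : ℕ → Set (Set X), (∀ n, (ℱ n).Finite ∧ ℱ n ⊆ 𝒰 n) ∧
      (⋃ n, ℱ n) ∈ omegaCovers X

/-- The one-point Lindelöfication topology on `Option α`: sets not containing
`none` (the point `∞`) are open, and a set containing `∞` is open iff its
complement is countable. -/
def lindTop (α : Type*) : TopologicalSpace (Option α) where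
  IsOpen S := none ∈ S → Sᶜ.Countable
  isOpen_univ := by simp
  isOpen_inter := by
    intro s t hs ht hmem
    rw [Set.compl_inter]
    exact (hs hmem.1).union (ht hmem.2)
  isOpen_sUnion := by
    intro S hS hmem
    obtain ⟨s, hsS, hns⟩ := hmem
    exact ((hS s hsS hns).mono
      (Set.compl_subset_compl.mpr (Set.subset_sUnion_of_mem hsS)))

/-- For any topological space `X`, TFAE: (i) `X` is selectively
separable; (ii) `X` is separable and has countable dense fan tightness at every
point; (iii) `X` has a countable dense subset `D` with countable dense fan
tightness at every point of `D`. -/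
theorem statement0 (X : Type*) [TopologicalSpace X] :
    List.TFAE [SelSep X,
      SeparableSpace X ∧ ∀ x : X, CDFTat X x,
      ∃ D : Set X, D.Countable ∧ Dense D ∧ ∀ x ∈ D, CDFTat X x] := by
  tfae_have 1 → 2 := by
    intro h
    refine ⟨?_, ?_⟩
    · obtain ⟨E, hE, hd⟩ := h (fun _ => Set.univ) (fun _ => dense_univ)
      exact ⟨⟨_, Set.countable_iUnion (fun n => (hE n).1.countable), hd⟩⟩
    · intro x A hA
      obtain ⟨E, hE, hd⟩ := h A hA
      exact ⟨E, hE, hd x⟩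
  tfae_have 2 → 3 := by
    rintro ⟨hs, h⟩
    obtain ⟨D, hc, hd⟩ := hs.exists_countable_dense
    exact ⟨D, hc, hd, fun x _ => h x⟩
  tfae_have 3 → 1 := by
    rintro ⟨D, hc, hd, h⟩ A hA
    rcases D.eq_empty_or_nonempty with rfl | hne
    · refine ⟨fun _ => ∅, fun n => ⟨Set.finite_empty, Set.empty_subset _⟩, ?_⟩
      simpa using hd
    · obtain ⟨f, rfl⟩ := hc.exists_eq_range hne
      have key : ∀ k : ℕ, ∃ B : ℕ → Set X,
          (∀ m, (B m).Finite ∧ B m ⊆ A (Nat.pair k m)) ∧ f k ∈ closure (⋃ m, B m) :=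
        fun k => h (f k) ⟨k, rfl⟩ (fun m => A (Nat.pair k m)) (fun m => hA _)
      choose B hB hcl using key
      refine ⟨fun n => B n.unpair.1 n.unpair.2, fun n => ?_, ?_⟩
      · have := hB n.unpair.1 n.unpair.2
        rwa [Nat.pair_unpair] at this
      · rw [← dense_closure]
        refine hd.mono ?_
        rintro _ ⟨k, rfl⟩
        refine closure_mono ?_ (hcl k)
        refine Set.iUnion_subset fun m y hy => ?_
        exact Set.mem_iUnion.2 ⟨Nat.pair k m, by simpa using hy⟩
  tfae_finish
end

section
/- For any topological space X, the following are equivalent: (i) Player II has a winning strategy in the selective separability game G_fin(𝒟_X, 𝒟_X); (ii) X is separable and for every x ∈ X Player II has a winning strategy in the countable dense fan tightness game G_fin(𝒟_X, ℬ_{X,x}); (iii) X has a countable dense subset D such that for every x ∈ D Player II has a winning strategy in G_fin(𝒟_X, ℬ_{X,x}). -/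
open TopologicalSpace Cardinal

theorem winStratFin_mono {X : Type*} {𝒜 ℬ ℬ' : Set (Set X)} (h : ℬ ⊆ ℬ')
    (hw : WinStratFin 𝒜 ℬ) : WinStratFin 𝒜 ℬ' := by
  obtain ⟨σ, h1, h2⟩ := hw
  exact ⟨σ, h1, fun A hA => h (h2 A hA)⟩

theorem winStratFin_of_seq {X : Type*} [TopologicalSpace X] (f : ℕ → X)
    (hd : Dense (Set.range f))
    (hw : ∀ i, WinStratFin (denseFamily X) (blades X (f i))) :
    WinStratFin (denseFamily X) (denseFamily X) := by
  choose τ h1 h2 using hw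
  refine ⟨fun n s => ⋃ p : {p : ℕ × ℕ // p ∈ Finset.HasAntidiagonal.antidiagonal n},
    τ p.1.1 p.1.2 (fun j => s ⟨p.1.1 + j, by
      have := Finset.HasAntidiagonal.mem_antidiagonal.1 p.2
      have := j.2
      omega⟩), ?_, ?_⟩
  · intro n s hs
    refine ⟨Set.finite_iUnion fun p => (h1 _ _ _ fun j => hs _).1, ?_⟩
    refine Set.iUnion_subset fun p => ?_
    refine (h1 _ _ _ fun j => hs _).2.trans ?_
    have := Finset.HasAntidiagonal.mem_antidiagonal.1 p.2
    have e : ∀ h, (⟨p.1.1 + (Fin.last p.1.2 : Fin (p.1.2 + 1)), h⟩ : Fin (n + 1)) = Fin.last n := by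
      intro h
      ext
      simpa using this
    rw [e]
  · intro A hA
    have key : Set.range f ⊆ closure (⋃ n : ℕ,
        ⋃ p : {p : ℕ × ℕ // p ∈ Finset.HasAntidiagonal.antidiagonal n},
          τ p.1.1 p.1.2 (fun j => A (p.1.1 + j))) := by
      rintro _ ⟨i, rfl⟩
      have := h2 i (fun m => A (i + m)) (fun m => hA _)
      refine closure_mono ?_ this
      refine Set.iUnion_subset fun m => ?_
      intro y hy
      exact Set.mem_iUnion.2 ⟨i + m, Set.mem_iUnion.2 ⟨⟨(i, m), by simp⟩, hy⟩⟩
    exact dense_closure.1 (hd.mono key)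

/-- TFAE: (i) II wins `G_fin(𝒟_X, 𝒟_X)`; (ii) `X` is separable and
II wins `G_fin(𝒟_X, ℬ_{X,x})` for every `x`; (iii) there is a countable dense
`D` with II winning `G_fin(𝒟_X, ℬ_{X,x})` for every `x ∈ D`. -/
theorem statement1 (X : Type*) [TopologicalSpace X] :
    List.TFAE [WinStratFin (denseFamily X) (denseFamily X),
      SeparableSpace X ∧ ∀ x : X, WinStratFin (denseFamily X) (blades X x),
      ∃ D : Set X, D.Countable ∧ Dense D ∧
        ∀ x ∈ D, WinStratFin (denseFamily X) (blades X x)] := by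
  tfae_have 1 → 2 := by
    intro h
    refine ⟨?_, fun x => winStratFin_mono (fun A hA => (hA : Dense A) x) h⟩
    obtain ⟨σ, h1, h2⟩ := h
    have hu : ∀ n : ℕ, (fun _ : ℕ => (Set.univ : Set X)) n ∈ denseFamily X :=
      fun _ => dense_univ
    exact ⟨_, Set.countable_iUnion fun n => (h1 n _ fun i => hu i).1.countable, h2 _ hu⟩
  tfae_have 2 → 3 := by
    rintro ⟨⟨D, hc, hd⟩, h⟩
    exact ⟨D, hc, hd, fun x _ => h x⟩
  tfae_have 3 → 1 := by
    rintro ⟨D, hc, hd, h⟩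
    rcases D.eq_empty_or_nonempty with rfl | hne
    · exact ⟨fun _ _ => ∅, fun _ _ _ => ⟨Set.finite_empty, Set.empty_subset _⟩,
        fun A _ => hd.mono (Set.empty_subset _)⟩
    · obtain ⟨f, rfl⟩ := hc.exists_eq_range hne
      exact winStratFin_of_seq f hd fun i => h _ ⟨i, rfl⟩
  tfae_finish
end

section
/- For any topological space X, the following are equivalent: (i) Player II has a winning Markov strategy in the selective separability game G_fin(𝒟_X, 𝒟_X); (ii) X is separable and for every x ∈ X Player II has a winning Markov strategy in the countable dense fan tightness game G_fin(𝒟_X, ℬ_{X,x}); (iii) X has a countable dense subset D such that for every x ∈ D Player II has a winning Markov strategy in G_fin(𝒟_X, ℬ_{X,x}). -/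
open TopologicalSpace Cardinal

/-- the Markov-strategy analogue of Statement 1. -/
theorem statement2 (X : Type*) [TopologicalSpace X] :
    List.TFAE [WinMarkovFin (denseFamily X) (denseFamily X),
      SeparableSpace X ∧ ∀ x : X, WinMarkovFin (denseFamily X) (blades X x),
      ∃ D : Set X, D.Countable ∧ Dense D ∧
        ∀ x ∈ D, WinMarkovFin (denseFamily X) (blades X x)] := by
  tfae_have 1 → 2 := by
    rintro ⟨σ, h1, h2⟩
    refine ⟨⟨⋃ n, σ Set.univ n, ?_, h2 (fun _ => Set.univ) (fun _ => dense_univ)⟩, ?_⟩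
    · exact Set.countable_iUnion fun n => (h1 _ dense_univ n).1.countable
    · exact fun x => ⟨σ, h1, fun A hA => h2 A hA x⟩
  tfae_have 2 → 3 := by
    rintro ⟨⟨D, hc, hd⟩, h⟩
    exact ⟨D, hc, hd, fun x _ => h x⟩
  tfae_have 3 → 1 := by
    rintro ⟨D, hc, hd, h⟩
    rcases D.eq_empty_or_nonempty with rfl | hne
    · refine ⟨fun _ _ => ∅, fun A _ n => ⟨Set.finite_empty, Set.empty_subset _⟩, fun A _ x => ?_⟩
      have := hd x
      simp at this
    · obtain ⟨f, rfl⟩ := hc.exists_eq_range hne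
      have h' : ∀ i, WinMarkovFin (denseFamily X) (blades X (f i)) := fun i => h _ ⟨i, rfl⟩
      choose σ h1 h2 using h'
      refine ⟨fun A n => σ n.unpair.1 A n.unpair.2, fun A hA n => h1 _ A hA _, fun A hA => ?_⟩
      have key : Set.range f ⊆ closure (⋃ n : ℕ, σ n.unpair.1 (A n) n.unpair.2) := by
        rintro _ ⟨i, rfl⟩
        refine closure_mono ?_ (h2 i (fun k => A (Nat.pair i k)) (fun k => hA _))
        refine Set.iUnion_subset fun k => ?_
        refine subset_trans ?_ (Set.subset_iUnion _ (Nat.pair i k))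
        simp
      exact dense_closure.1 (hd.mono key)
  tfae_finish
end

section
/- For any completely regular Hausdorff (Tychonoff) topological space X, the following are equivalent: (i) X is Ω-Menger, i.e., for every sequence (𝒰_n)_{n<ω} of ω-covers of X there exist finite ℱ_n ⊆ 𝒰_n with ⋃_{n<ω} ℱ_n an ω-cover of X; (ii) C_p(X) has countable fan tightness at every point; (iii) C_p(X) has countable dense fan tightness at every point. -/
open TopologicalSpace Cardinal

theorem aux_mem_closure {X : Type*} [TopologicalSpace X] (f : Cp X) (A : Set (Cp X)) :
    f ∈ closure A ↔ ∀ F : Set X, F.Finite → ∀ ε : ℝ, 0 < ε →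
      ∃ g ∈ A, ∀ x ∈ F, |g.1 x - f.1 x| < ε := by
  constructor
  · intro h F hF ε hε
    have ho : IsOpen {g : Cp X | ∀ x ∈ F, |g.1 x - f.1 x| < ε} := by
      have : {g : Cp X | ∀ x ∈ F, |g.1 x - f.1 x| < ε}
          = ⋂ x ∈ F, {g : Cp X | |g.1 x - f.1 x| < ε} := by
        ext g; simp
      rw [this]
      refine hF.isOpen_biInter fun x _ => ?_
      have hc : Continuous fun g : Cp X => g.1 x :=
        (continuous_apply x).comp continuous_subtype_val
      exact isOpen_lt (hc.sub continuous_const).abs continuous_const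
    obtain ⟨g, hg, hgA⟩ := mem_closure_iff.1 h _ ho (by intro x _; simpa using hε)
    exact ⟨g, hgA, hg⟩
  · intro h
    rw [mem_closure_iff_nhds]
    intro t ht
    rw [nhds_subtype_eq_comap, Filter.mem_comap] at ht
    obtain ⟨s, hs, hst⟩ := ht
    rw [nhds_pi, Filter.mem_pi] at hs
    obtain ⟨I, hI, u, hu, hIu⟩ := hs
    have hev : ∀ᶠ ε : ℝ in nhdsWithin 0 (Set.Ioi 0), ∀ x ∈ I, Metric.ball (f.1 x) ε ⊆ u x := by
      rw [Filter.eventually_all_finite hI]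
      intro x _
      obtain ⟨δ, hδ, hb⟩ := Metric.mem_nhds_iff.1 (hu x)
      filter_upwards [Ioo_mem_nhdsGT hδ] with ε hε
      exact (Metric.ball_subset_ball hε.2.le).trans hb
    obtain ⟨ε, hε, hpos⟩ := (hev.and self_mem_nhdsWithin).exists
    obtain ⟨g, hgA, hg⟩ := h I hI ε hpos
    refine ⟨g, hst (hIu fun x hx => hε x hx ?_), hgA⟩
    rw [Metric.mem_ball, Real.dist_eq]
    exact hg x hx

theorem aux_omega {X : Type*} [TopologicalSpace X] (𝒰 : Set (Set X))
    (h1 : ∀ U ∈ 𝒰, IsOpen U) (h2 : ∀ F : Set X, F.Finite → ∃ U ∈ 𝒰, F ⊆ U) :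
    𝒰 ∈ omegaCovers X := by
  refine ⟨h1, ?_, h2⟩
  refine Set.eq_univ_of_forall fun x => ?_
  obtain ⟨U, hU, hx⟩ := h2 {x} (Set.finite_singleton x)
  exact ⟨U, hU, hx rfl⟩

theorem aux_12 {X : Type*} [TopologicalSpace X] (h : OmegaMenger X) (f : Cp X) :
    CFTat (Cp X) f := by
  intro A hA
  let V : ℕ → Cp X → Set X := fun n g => {x | |g.1 x - f.1 x| < 1 / ((n : ℝ) + 1)}
  have hV : ∀ n, V n '' A n ∈ omegaCovers X := by
    intro n
    apply aux_omega
    · rintro _ ⟨g, _, rfl⟩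
      exact isOpen_lt (g.2.sub f.2).abs continuous_const
    · intro F hF
      obtain ⟨g, hg, hgF⟩ := (aux_mem_closure f (A n)).1 (hA n) F hF (1 / ((n : ℝ) + 1))
        Nat.one_div_pos_of_nat
      exact ⟨_, ⟨g, hg, rfl⟩, hgF⟩
  have key : ∀ k : ℕ, ∃ B : ℕ → Set (Cp X), (∀ n, (B n).Finite ∧ B n ⊆ A (n + k)) ∧
      ∀ F : Set X, F.Finite → ∃ n, ∃ g ∈ B n, F ⊆ V (n + k) g := by
    intro k
    obtain ⟨ℱ, h1, h2⟩ := h (fun n => V (n + k) '' A (n + k)) (fun n => hV _)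
    have : ∀ n, ∃ B : Set (Cp X), B ⊆ A (n + k) ∧ B.Finite ∧ V (n + k) '' B = ℱ n := by
      intro n
      exact (Set.exists_subset_image_finite_and (p := fun s => s = ℱ n)).1
        ⟨ℱ n, (h1 n).2, (h1 n).1, rfl⟩
    choose B hB1 hB2 hB3 using this
    refine ⟨B, fun n => ⟨hB2 n, hB1 n⟩, fun F hF => ?_⟩
    obtain ⟨U, hU, hFU⟩ := h2.2.2 F hF
    obtain ⟨n, hn⟩ := Set.mem_iUnion.1 hU
    rw [← hB3 n] at hn
    obtain ⟨g, hg, rfl⟩ := hn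
    exact ⟨n, g, hg, hFU⟩
  choose B hB1 hB2 using key
  refine ⟨fun n => ⋃ k ∈ Set.Iic n, B k (n - k), fun n => ⟨?_, ?_⟩, ?_⟩
  · exact (Set.finite_Iic n).biUnion fun k _ => (hB1 k _).1
  · refine Set.iUnion₂_subset fun k hk => ?_
    have := (hB1 k (n - k)).2
    rwa [Nat.sub_add_cancel hk] at this
  · rw [aux_mem_closure]
    intro F hF ε hε
    obtain ⟨k, hk⟩ := exists_nat_one_div_lt hε
    obtain ⟨n, g, hg, hFg⟩ := hB2 k F hF
    refine ⟨g, Set.mem_iUnion.2 ⟨n + k, Set.mem_iUnion₂.2 ⟨k, Nat.le_add_left _ _, ?_⟩⟩, ?_⟩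
    · rwa [Nat.add_sub_cancel]
    · intro x hx
      refine (hFg hx).trans (lt_of_le_of_lt ?_ hk)
      exact Nat.one_div_le_one_div (Nat.le_add_left _ _)

theorem aux_31 {X : Type*} [TopologicalSpace X] [T35Space X]
    (h : ∀ f : Cp X, CDFTat (Cp X) f) : OmegaMenger X := by
  intro 𝒰 h𝒰
  obtain ⟨B, hB, hcl⟩ := h ⟨fun _ => 0, continuous_const⟩
    (fun n => {g | ∃ U ∈ 𝒰 n, ∀ x ∉ U, g.1 x = 1}) (by
      intro n f
      rw [aux_mem_closure]
      intro F hF ε hε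
      obtain ⟨U, hU, hFU⟩ := (h𝒰 n).2.2 F hF
      have hUo := (h𝒰 n).1 U hU
      have hex : ∀ x : X, ∃ p : X → ℝ, Continuous p ∧ (x ∈ F → p x = 0) ∧ ∀ y ∉ U, p y = 1 := by
        intro x
        by_cases hx : x ∈ F
        · obtain ⟨q, hq, hq0, hq1⟩ := CompletelyRegularSpace.completely_regular x Uᶜ
            hUo.isClosed_compl (fun hn => hn (hFU hx))
          refine ⟨fun y => q y, continuous_subtype_val.comp hq, fun _ => by simp [hq0], ?_⟩
          intro y hy
          have := hq1 hy
          simp [this]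
        · exact ⟨fun _ => 1, continuous_const, fun hh => absurd hh hx, fun _ _ => rfl⟩
      choose p hp hp0 hp1 using hex
      let P : X → ℝ := fun y => ∏ x ∈ hF.toFinset, p x y
      have hP : Continuous P := continuous_finsetProd _ fun x _ => hp x
      refine ⟨⟨fun y => (1 - P y) * f.1 y + P y,
        ((continuous_const.sub hP).mul f.2).add hP⟩, ⟨U, hU, ?_⟩, ?_⟩
      · intro y hy
        have : P y = 1 := Finset.prod_eq_one fun x _ => hp1 x y hy
        simp [this]
      · intro y hy
        have : P y = 0 := Finset.prod_eq_zero (hF.mem_toFinset.2 hy) (hp0 y hy)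
        simpa [this] using hε)
  have hsel : ∀ n, ∀ g : Cp X, ∃ U, g ∈ B n → U ∈ 𝒰 n ∧ ∀ x ∉ U, g.1 x = 1 := by
    intro n g
    by_cases hg : g ∈ B n
    · obtain ⟨U, hU⟩ := (hB n).2 hg
      exact ⟨U, fun _ => hU⟩
    · exact ⟨∅, fun hh => absurd hh hg⟩
  choose W hW using hsel
  have hsub : ∀ n, W n '' B n ⊆ 𝒰 n := by
    rintro n _ ⟨g, hg, rfl⟩
    exact (hW n g hg).1
  refine ⟨fun n => W n '' B n, fun n => ⟨(hB n).1.image _, hsub n⟩, ?_⟩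
  apply aux_omega
  · intro U hU
    obtain ⟨n, hn⟩ := Set.mem_iUnion.1 hU
    exact (h𝒰 n).1 U (hsub n hn)
  · intro F hF
    obtain ⟨g, hg, hgF⟩ := (aux_mem_closure _ _).1 hcl F hF 1 one_pos
    obtain ⟨n, hn⟩ := Set.mem_iUnion.1 hg
    refine ⟨W n g, Set.mem_iUnion.2 ⟨n, g, hn, rfl⟩, fun x hx => ?_⟩
    by_contra hxU
    have h1 := hgF x hx
    rw [(hW n g hn).2 x hxU] at h1
    norm_num at h1

/-- For Tychonoff `X`, TFAE: (i) `X` is Ω-Menger;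
(ii) `C_p(X)` has countable fan tightness at every point;
(iii) `C_p(X)` has countable dense fan tightness at every point. -/
theorem statement3 (X : Type*) [TopologicalSpace X] [T35Space X] :
    List.TFAE [OmegaMenger X,
      ∀ f : Cp X, CFTat (Cp X) f,
      ∀ f : Cp X, CDFTat (Cp X) f] := by
  tfae_have 1 → 2 := fun h f => aux_12 h f
  tfae_have 2 → 3 := fun h f A hA => h f A fun n => hA n f
  tfae_have 3 → 1 := aux_31
  tfae_finish
end

section
/- For any completely regular Hausdorff (Tychonoff) topological space X, the following are equivalent: (i) Player II has a winning strategy in the ω-Menger game G_fin(Ω_X, Ω_X); (ii) for every f ∈ C_p(X), Player II has a winning strategy in the countable fan tightness game G_fin(ℬ_{C_p(X),f}, ℬ_{C_p(X),f}); (iii) for every f ∈ C_p(X), Player II has a winning strategy in the countable dense fan tightness game G_fin(𝒟_{C_p(X)}, ℬ_{C_p(X),f}). -/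
open TopologicalSpace Cardinal

lemma mem_closure_Cp {X : Type*} [TopologicalSpace X] (f : Cp X) (A : Set (Cp X)) :
    f ∈ closure A ↔ ∀ F : Finset X, ∀ ε : ℝ, 0 < ε →
      ∃ g ∈ A, ∀ x ∈ F, |g.1 x - f.1 x| < ε := by
  constructor
  · intro h F ε hε
    have ho : IsOpen {g : Cp X | ∀ x ∈ F, |g.1 x - f.1 x| < ε} := by
      have : {g : Cp X | ∀ x ∈ F, |g.1 x - f.1 x| < ε} =
          ⋂ x ∈ F, {g : Cp X | |g.1 x - f.1 x| < ε} := by ext g; simp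
      rw [this]
      refine isOpen_biInter_finset fun x _ => ?_
      have hc : Continuous fun g : Cp X => g.1 x :=
        (continuous_apply x).comp continuous_subtype_val
      exact isOpen_lt (hc.sub continuous_const).abs continuous_const
    obtain ⟨g, hg, hgA⟩ := mem_closure_iff.1 h _ ho (by intro x _; simpa using hε)
    exact ⟨g, hgA, hg⟩
  · intro h
    rw [mem_closure_iff]
    intro o ho hfo
    obtain ⟨o', ho', rfl⟩ := isOpen_induced_iff.1 ho
    obtain ⟨I, u, hu, hI⟩ := isOpen_pi_iff.1 ho' f.1 hfo
    have hev : ∀ᶠ ε in nhdsWithin (0:ℝ) (Set.Ioi 0),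
        ∀ a ∈ I, Metric.ball (f.1 a) ε ⊆ u a := by
      rw [Filter.eventually_all_finset]
      intro a ha
      obtain ⟨e, he, hb⟩ := Metric.isOpen_iff.1 (hu a ha).1 _ (hu a ha).2
      filter_upwards [Ioo_mem_nhdsGT he] with ε hε
      exact (Metric.ball_subset_ball hε.2.le).trans hb
    obtain ⟨ε, hε, hε0⟩ := (hev.and self_mem_nhdsWithin).exists
    obtain ⟨g, hg, hgF⟩ := h I ε hε0
    refine ⟨g, hI fun a ha => hε a ha ?_, hg⟩
    rw [Metric.mem_ball, Real.dist_eq]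
    exact hgF a ha

lemma exists_bump {X : Type*} [TopologicalSpace X] [T35Space X] (F : Finset X) (U : Set X)
    (hU : IsOpen U) (hF : (F : Set X) ⊆ U) :
    ∃ p : X → ℝ, Continuous p ∧ (∀ x ∈ F, p x = 0) ∧ ∀ x, x ∉ U → p x = 1 := by
  have h1 : ∀ x : X, ∃ q : X → ℝ, Continuous q ∧ (x ∈ F → q x = 0) ∧ ∀ y, y ∉ U → q y = 1 := by
    intro x
    by_cases hx : x ∈ F
    · obtain ⟨q, hq, h0, h1⟩ := CompletelyRegularSpace.completely_regular x Uᶜ hU.isClosed_compl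
        (by simpa using hF hx)
      refine ⟨fun y => (q y : ℝ), continuous_subtype_val.comp hq, fun _ => by simp [h0], ?_⟩
      intro y hy
      have := h1 hy
      simp [this]
    · exact ⟨fun _ => 1, continuous_const, fun h => absurd h hx, fun _ _ => rfl⟩
  choose q hq h0 h1 using h1
  refine ⟨fun y => ∏ x ∈ F, q x y, continuous_finsetProd _ fun x _ => hq x, ?_, ?_⟩
  · intro x hx
    exact Finset.prod_eq_zero hx (h0 x hx)
  · intro y hy
    exact Finset.prod_eq_one fun x _ => h1 x y hy

lemma one_to_two {X : Type*} [TopologicalSpace X]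
    (h : WinStratFin (omegaCovers X) (omegaCovers X)) (f : Cp X) :
    WinStratFin (blades (Cp X) f) (blades (Cp X) f) := by
  classical
  obtain ⟨σ, hσ, hw⟩ := h
  let V : ℕ → Cp X → Set X := fun n g => {x | |g.1 x - f.1 x| < 1 / ((n:ℝ) + 1)}
  let T : ℕ → Set (Cp X) → Set (Set X) := fun n A => V n '' A
  have hT : ∀ n, ∀ A ∈ blades (Cp X) f, T n A ∈ omegaCovers X := by
    intro n A hA
    have hfin : ∀ F : Set X, F.Finite → ∃ U ∈ T n A, F ⊆ U := by
      intro F hF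
      obtain ⟨g, hg, hgF⟩ := (mem_closure_Cp f A).1 hA hF.toFinset (1 / ((n:ℝ) + 1)) (by positivity)
      exact ⟨V n g, ⟨g, hg, rfl⟩, fun x hx => hgF x (by simpa using hx)⟩
    refine ⟨?_, ?_, hfin⟩
    · rintro _ ⟨g, hg, rfl⟩
      exact isOpen_lt (g.2.sub f.2).abs continuous_const
    · refine Set.eq_univ_of_forall fun x => ?_
      obtain ⟨U, hU, hx⟩ := hfin {x} (Set.finite_singleton x)
      exact ⟨U, hU, hx rfl⟩
  have hpull : ∀ (n : ℕ) (A : Set (Cp X)) (U : Set X), ∃ g, U ∈ T n A → g ∈ A ∧ V n g = U := by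
    intro n A U
    by_cases hU : U ∈ T n A
    · obtain ⟨g, hg⟩ := hU
      exact ⟨g, fun _ => hg⟩
    · exact ⟨f, fun h => absurd h hU⟩
  choose P hP using hpull
  let ex : (n : ℕ) → (Fin (n + 1) → Set (Cp X)) → ℕ → Set (Cp X) :=
    fun n s k => if h : k < n + 1 then s ⟨k, h⟩ else s (Fin.last n)
  let τ : (n : ℕ) → (ℕ → Set (Cp X)) → ℕ → Set (Set X) := fun N A m =>
    σ m (fun i => T (N + i) (A (N + i)))
  have hτ : ∀ N A m, (∀ k, A k ∈ blades (Cp X) f) →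
      (τ N A m).Finite ∧ τ N A m ⊆ T (N + m) (A (N + m)) := by
    intro N A m hA
    exact hσ m (fun i => T (N + i) (A (N + i))) (fun i => hT _ _ (hA _))
  refine ⟨fun n s => ⋃ N ∈ Finset.range (n + 1), P n (s (Fin.last n)) '' τ N (ex n s) (n - N),
    ?_, ?_⟩
  · intro n s hs
    have hex : ∀ k, ex n s k ∈ blades (Cp X) f := by
      intro k
      simp only [ex]
      split_ifs
      · exact hs _
      · exact hs _
    have hexn : ex n s n = s (Fin.last n) := by
      simp [ex, Fin.last]
    constructor
    · exact (Finset.finite_toSet _).biUnion fun N _ => ((hτ N _ _ hex).1.image _)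
    · refine Set.iUnion₂_subset fun N hN => ?_
      rintro _ ⟨U, hU, rfl⟩
      have h2 := (hτ N _ _ hex).2 hU
      have hNn : N + (n - N) = n := by
        have := Finset.mem_range.1 hN
        omega
      rw [hNn, hexn] at h2
      exact (hP _ _ _ h2).1
  · intro A hA
    refine (mem_closure_Cp f _).2 fun F ε hε => ?_
    obtain ⟨N, hN⟩ := exists_nat_one_div_lt hε
    obtain ⟨-, -, hc⟩ := hw (fun m => T (N + m) (A (N + m))) (fun m => hT _ _ (hA _))
    obtain ⟨U, hU, hFU⟩ := hc F F.finite_toSet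
    obtain ⟨m, hm⟩ := Set.mem_iUnion.1 hU
    have hm' : U ∈ τ N A m := hm
    have h2 := (hτ N A m hA).2 hm'
    obtain ⟨h3, h4⟩ := hP _ _ _ h2
    refine ⟨P (N + m) (A (N + m)) U, ?_, ?_⟩
    · refine Set.mem_iUnion.2 ⟨N + m, Set.mem_iUnion₂.2 ⟨N, by simp, U, ?_, rfl⟩⟩
      rw [Nat.add_sub_cancel_left]
      have : τ N (ex (N + m) fun i => A i) m = τ N A m := by
        simp only [τ]
        congr 1
        funext i
        have : (i : ℕ) ≤ m := by omega
        simp [ex, this]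
      rw [this]
      exact hm'
    · intro x hx
      have h5 : x ∈ V (N + m) (P (N + m) (A (N + m)) U) := by rw [h4]; exact hFU hx
      have h6 : |(P (N + m) (A (N + m)) U).1 x - f.1 x| < 1 / (((N + m : ℕ) : ℝ) + 1) := h5
      refine h6.trans_le (le_trans ?_ hN.le)
      apply one_div_le_one_div_of_le (by positivity)
      push_cast
      have : (0:ℝ) ≤ m := by positivity
      linarith

lemma three_to_one {X : Type*} [TopologicalSpace X] [T35Space X]
    (h : WinStratFin (denseFamily (Cp X)) (blades (Cp X) ⟨fun _ => 0, continuous_const⟩)) :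
    WinStratFin (omegaCovers X) (omegaCovers X) := by
  classical
  obtain ⟨σ, hσ, hw⟩ := h
  let D : Set (Set X) → Set (Cp X) := fun 𝒰 => {g | ∃ U ∈ 𝒰, ∀ x, x ∉ U → g.1 x = 1}
  have hD : ∀ 𝒰 ∈ omegaCovers X, D 𝒰 ∈ denseFamily (Cp X) := by
    rintro 𝒰 ⟨ho, -, hc⟩ f
    refine (mem_closure_Cp f _).2 fun F ε hε => ?_
    obtain ⟨U, hU, hFU⟩ := hc F F.finite_toSet
    obtain ⟨p, hp, h0, h1⟩ := exists_bump F U (ho U hU) hFU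
    refine ⟨⟨fun x => (1 - p x) * f.1 x + p x, ?_⟩, ⟨U, hU, ?_⟩, ?_⟩
    · exact ((continuous_const.sub hp).mul f.2).add hp
    · intro x hx
      simp [h1 x hx]
    · intro x hx
      simp [h0 x hx, hε]
  have hpull : ∀ (𝒰 : Set (Set X)) (g : Cp X), ∃ U, g ∈ D 𝒰 → U ∈ 𝒰 ∧ ∀ x, x ∉ U → g.1 x = 1 := by
    intro 𝒰 g
    by_cases hg : g ∈ D 𝒰
    · obtain ⟨U, hU⟩ := hg
      exact ⟨U, fun _ => hU⟩
    · exact ⟨∅, fun h => absurd h hg⟩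
  choose P hP using hpull
  refine ⟨fun n s => P (s (Fin.last n)) '' σ n (fun i => D (s i)), ?_, ?_⟩
  · intro n s hs
    obtain ⟨h1, h2⟩ := hσ n (fun i => D (s i)) (fun i => hD _ (hs i))
    refine ⟨h1.image _, ?_⟩
    rintro _ ⟨g, hg, rfl⟩
    exact (hP _ _ (h2 hg)).1
  · intro A hA
    have hsub : ∀ n, σ n (fun i => D (A i)) ⊆ D (A n) := fun n => by
      have := (hσ n (fun i => D (A i)) (fun i => hD _ (hA i))).2
      simpa using this
    have hfin : ∀ F : Set X, F.Finite →
        ∃ U ∈ ⋃ n : ℕ, P (A (Fin.last n)) '' σ n (fun i => D (A i)), F ⊆ U := by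
      intro F hF
      obtain ⟨g, hg, hgF⟩ := (mem_closure_Cp _ _).1 (hw (fun n => D (A n)) (fun n => hD _ (hA n)))
        hF.toFinset 1 one_pos
      obtain ⟨n, hn⟩ := Set.mem_iUnion.1 hg
      refine ⟨P (A n) g, Set.mem_iUnion.2 ⟨n, g, hn, by simp⟩, fun x hx => ?_⟩
      by_contra hxU
      have := hgF x (by simpa using hx)
      rw [(hP _ _ (hsub n hn)).2 x hxU] at this
      simp at this
    refine ⟨?_, ?_, hfin⟩
    · intro U hU
      obtain ⟨n, g, hg, rfl⟩ := Set.mem_iUnion.1 hU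
      have := (hP _ _ (hsub n hg)).1
      simpa using (hA n).1 _ this
    · refine Set.eq_univ_of_forall fun x => ?_
      obtain ⟨U, hU, hx⟩ := hfin {x} (Set.finite_singleton x)
      exact ⟨U, hU, hx rfl⟩

/-- For Tychonoff `X`, TFAE: (i) II wins `G_fin(Ω_X, Ω_X)`;
(ii) II wins the countable fan tightness game at every `f ∈ C_p(X)`;
(iii) II wins the countable dense fan tightness game at every `f ∈ C_p(X)`. -/
theorem statement4 (X : Type*) [TopologicalSpace X] [T35Space X] :
    List.TFAE [WinStratFin (omegaCovers X) (omegaCovers X),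
      ∀ f : Cp X, WinStratFin (blades (Cp X) f) (blades (Cp X) f),
      ∀ f : Cp X, WinStratFin (denseFamily (Cp X)) (blades (Cp X) f)] := by
  tfae_have 1 → 2 := fun h f => one_to_two h f
  tfae_have 2 → 3 := by
    intro h f
    obtain ⟨σ, hσ, hw⟩ := h f
    have hd : ∀ D ∈ denseFamily (Cp X), D ∈ blades (Cp X) f := fun D hD => hD f
    exact ⟨σ, fun n s hs => hσ n s fun i => hd _ (hs i), fun A hA => hw A fun n => hd _ (hA n)⟩
  tfae_have 3 → 1 := fun h => three_to_one (h _)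
  tfae_finish
end

section
/- For a regular topological space X, the following are equivalent: (i) X is σ-compact; (ii) Player II has a winning Markov strategy in the ω-Menger game G_fin(Ω_X, Ω_X); (iii) Player II has a winning Markov strategy in the Menger game G_fin(𝒪_X, 𝒪_X). -/
open TopologicalSpace Cardinal

theorem aux_closure {X : Type*} [TopologicalSpace X] [RegularSpace X] (K : Set X)
    (hK : ∀ 𝒰 ∈ openCovers X, ∃ F : Set (Set X), F.Finite ∧ F ⊆ 𝒰 ∧ K ⊆ ⋃₀ F) :
    IsCompact (closure K) := by
  classical
  refine isCompact_of_finite_subcover ?_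
  intro ι U hU hcov
  have key : ∀ (x : X) (W : Set X), IsOpen W → x ∈ W →
      ∃ V, IsOpen V ∧ x ∈ V ∧ closure V ⊆ W := by
    intro x W hW hx
    obtain ⟨t, ht, htc, hts⟩ := exists_mem_nhds_isClosed_subset (hW.mem_nhds hx)
    exact ⟨interior t, isOpen_interior, mem_interior_iff_mem_nhds.2 ht,
      (closure_minimal interior_subset htc).trans hts⟩
  obtain ⟨F, hF, hFs, hFK⟩ := hK
    {V | IsOpen V ∧ ∃ t : Finset ι, closure V ∩ closure K ⊆ ⋃ i ∈ t, U i} (by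
      refine ⟨fun V hV => hV.1, Set.eq_univ_of_forall fun x => ?_⟩
      by_cases hx : x ∈ closure K
      · obtain ⟨i, hi⟩ := Set.mem_iUnion.1 (hcov hx)
        obtain ⟨V, hV, hxV, hVU⟩ := key x (U i) (hU i) hi
        refine ⟨V, ⟨hV, {i}, ?_⟩, hxV⟩
        intro y hy
        simpa using hVU hy.1
      · obtain ⟨V, hV, hxV, hVU⟩ := key x (closure K)ᶜ isClosed_closure.isOpen_compl hx
        refine ⟨V, ⟨hV, ∅, ?_⟩, hxV⟩
        intro y hy
        exact absurd hy.2 (hVU hy.1))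
  have h2 : ∀ V : Set X, ∃ t : Finset ι, V ∈ F → closure V ∩ closure K ⊆ ⋃ i ∈ t, U i := by
    intro V
    by_cases hV : V ∈ F
    · obtain ⟨t, ht⟩ := (hFs hV).2
      exact ⟨t, fun _ => ht⟩
    · exact ⟨∅, fun h => absurd h hV⟩
  choose g hg using h2
  refine ⟨hF.toFinset.biUnion g, ?_⟩
  intro x hx
  have hx2 : x ∈ closure (⋃₀ F) := closure_mono hFK hx
  rw [hF.closure_sUnion] at hx2
  obtain ⟨V, hV, hxV⟩ := Set.mem_iUnion₂.1 hx2
  obtain ⟨i, hi, hxi⟩ := Set.mem_iUnion₂.1 (hg V hV ⟨hxV, hx⟩)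
  exact Set.mem_iUnion₂.2 ⟨i, Finset.mem_biUnion.2 ⟨V, hF.mem_toFinset.2 hV, hi⟩, hxi⟩

theorem aux_pow {X : Type*} [TopologicalSpace X] (K : Set X) (hK : IsCompact K) (m : ℕ)
    (𝒰 : Set (Set X)) (h𝒰 : 𝒰 ∈ omegaCovers X) :
    ∃ F : Set (Set X), F.Finite ∧ F ⊆ 𝒰 ∧
      ∀ f : Fin m → X, (∀ i, f i ∈ K) → ∃ U ∈ F, Set.range f ⊆ U := by
  have hc : IsCompact (Set.pi Set.univ fun _ : Fin m => K) := isCompact_univ_pi fun _ => hK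
  obtain ⟨b, hb, hbf, hcov⟩ := hc.elim_finite_subcover_image (b := 𝒰)
    (c := fun U => Set.pi Set.univ fun _ : Fin m => U)
    (fun U hU => isOpen_set_pi Set.finite_univ fun _ _ => h𝒰.1 U hU) (by
      intro f _
      obtain ⟨U, hU, hfU⟩ := h𝒰.2.2 (Set.range f) (Set.finite_range f)
      exact Set.mem_iUnion₂.2 ⟨U, hU, fun i _ => hfU ⟨i, rfl⟩⟩)
  refine ⟨b, hbf, hb, fun f hf => ?_⟩
  obtain ⟨U, hU, hfU⟩ := Set.mem_iUnion₂.1 (hcov (fun i _ => hf i : f ∈ _))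
  refine ⟨U, hU, ?_⟩
  rintro _ ⟨i, rfl⟩
  exact hfU i trivial

theorem aux12 {X : Type*} [TopologicalSpace X] [SigmaCompactSpace X] :
    WinMarkovFin (omegaCovers X) (omegaCovers X) := by
  have h : ∀ (𝒰 : Set (Set X)) (n : ℕ), ∃ F : Set (Set X), 𝒰 ∈ omegaCovers X →
      F.Finite ∧ F ⊆ 𝒰 ∧ ∀ f : Fin n.unpair.1 → X,
        (∀ i, f i ∈ compactCovering X n.unpair.2) → ∃ U ∈ F, Set.range f ⊆ U := by
    intro 𝒰 n
    by_cases hU : 𝒰 ∈ omegaCovers X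
    · obtain ⟨F, hF⟩ := aux_pow _ (isCompact_compactCovering X n.unpair.2) n.unpair.1 𝒰 hU
      exact ⟨F, fun _ => hF⟩
    · exact ⟨∅, fun h => absurd h hU⟩
  choose σ hσ using h
  refine ⟨σ, fun A hA n => ⟨(hσ A n hA).1, (hσ A n hA).2.1⟩, fun A hA => ?_⟩
  have hfin : ∀ F : Set X, F.Finite → ∃ U ∈ ⋃ n, σ (A n) n, F ⊆ U := by
    intro F hF
    obtain ⟨m, f, rfl⟩ : ∃ (m : ℕ) (f : Fin m → X), Set.range f = F := by
      obtain ⟨m, f, hf⟩ := hF.fin_param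
      exact ⟨m, f, hf.2⟩
    have hk : ∀ i, ∃ k, f i ∈ compactCovering X k := fun i => exists_mem_compactCovering (f i)
    choose k hk using hk
    let N := Finset.univ.sup k
    have hn := (hσ (A (Nat.pair m N)) (Nat.pair m N) (hA _)).2.2
    rw [Nat.unpair_pair] at hn
    obtain ⟨U, hU, hfU⟩ := hn f fun i =>
      compactCovering_subset X (Finset.le_sup (Finset.mem_univ i)) (hk i)
    exact ⟨U, Set.mem_iUnion.2 ⟨_, hU⟩, hfU⟩
  refine ⟨?_, Set.eq_univ_of_forall fun x => ?_, hfin⟩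
  · intro U hU
    obtain ⟨n, hn⟩ := Set.mem_iUnion.1 hU
    exact (hA n).1 U ((hσ _ _ (hA n)).2.1 hn)
  · obtain ⟨U, hU, hx⟩ := hfin {x} (Set.finite_singleton x)
    exact ⟨U, hU, hx rfl⟩

theorem aux23 {X : Type*} [TopologicalSpace X]
    (h : WinMarkovFin (omegaCovers X) (omegaCovers X)) :
    WinMarkovFin (openCovers X) (openCovers X) := by
  obtain ⟨σ, hσ, hwin⟩ := h
  let W : Set (Set X) → Set (Set X) := fun 𝒰 =>
    {V | ∃ F : Set (Set X), F.Finite ∧ F ⊆ 𝒰 ∧ V = ⋃₀ F}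
  have hW : ∀ 𝒰 ∈ openCovers X, W 𝒰 ∈ omegaCovers X := by
    intro 𝒰 h𝒰
    have hfin : ∀ F : Set X, F.Finite → ∃ U ∈ W 𝒰, F ⊆ U := by
      intro F hF
      have : ∀ x : X, ∃ U ∈ 𝒰, x ∈ U := fun x => by
        have : x ∈ ⋃₀ 𝒰 := h𝒰.2 ▸ Set.mem_univ x
        exact this
      choose g hg hxg using this
      refine ⟨⋃₀ (g '' F), ⟨g '' F, hF.image g, ?_, rfl⟩, ?_⟩
      · rintro _ ⟨x, _, rfl⟩
        exact hg x
      · intro x hx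
        exact ⟨g x, ⟨x, hx, rfl⟩, hxg x⟩
    refine ⟨?_, Set.eq_univ_of_forall fun x => ?_, hfin⟩
    · rintro _ ⟨F, _, hFs, rfl⟩
      exact isOpen_sUnion fun U hU => h𝒰.1 U (hFs hU)
    · obtain ⟨U, hU, hx⟩ := hfin {x} (Set.finite_singleton x)
      exact ⟨U, hU, hx rfl⟩
  have hr : ∀ (𝒰 : Set (Set X)) (V : Set X), ∃ F : Set (Set X),
      V ∈ W 𝒰 → F.Finite ∧ F ⊆ 𝒰 ∧ V = ⋃₀ F := by
    intro 𝒰 V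
    by_cases hV : V ∈ W 𝒰
    · obtain ⟨F, hF⟩ := hV
      exact ⟨F, fun _ => hF⟩
    · exact ⟨∅, fun h => absurd h hV⟩
  choose r hr using hr
  have hsub : ∀ 𝒰 ∈ openCovers X, ∀ n, (⋃ V ∈ σ (W 𝒰) n, r 𝒰 V) ⊆ 𝒰 := by
    intro 𝒰 h𝒰 n
    exact Set.iUnion₂_subset fun V hV => (hr 𝒰 V ((hσ _ (hW 𝒰 h𝒰) n).2 hV)).2.1
  refine ⟨fun 𝒰 n => ⋃ V ∈ σ (W 𝒰) n, r 𝒰 V, fun 𝒰 h𝒰 n => ⟨?_, hsub 𝒰 h𝒰 n⟩, fun A hA => ?_⟩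
  · exact (hσ _ (hW 𝒰 h𝒰) n).1.biUnion fun V hV => (hr 𝒰 V ((hσ _ (hW 𝒰 h𝒰) n).2 hV)).1
  · refine ⟨fun U hU => ?_, Set.eq_univ_of_forall fun x => ?_⟩
    · obtain ⟨n, hn⟩ := Set.mem_iUnion.1 hU
      exact (hA n).1 U (hsub _ (hA n) n hn)
    · have h1 := (hwin (fun n => W (A n)) fun n => hW _ (hA n)).2.1
      have hx : x ∈ ⋃₀ ⋃ n, σ (W (A n)) n := h1 ▸ Set.mem_univ x
      obtain ⟨V, hV, hxV⟩ := hx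
      obtain ⟨n, hn⟩ := Set.mem_iUnion.1 hV
      have h2 := (hr (A n) V ((hσ _ (hW _ (hA n)) n).2 hn)).2.2
      rw [h2] at hxV
      obtain ⟨U, hU, hxU⟩ := hxV
      exact ⟨U, Set.mem_iUnion.2 ⟨n, Set.mem_iUnion₂.2 ⟨V, hn, hU⟩⟩, hxU⟩

theorem aux31 {X : Type*} [TopologicalSpace X] [RegularSpace X]
    (h : WinMarkovFin (openCovers X) (openCovers X)) : SigmaCompactSpace X := by
  obtain ⟨σ, hσ, hwin⟩ := h
  let K : ℕ → Set X := fun n => {x | ∀ 𝒰 ∈ openCovers X, x ∈ ⋃₀ σ 𝒰 n}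
  refine ⟨⟨fun n => closure (K n), fun n => aux_closure _ fun 𝒰 h𝒰 =>
    ⟨σ 𝒰 n, (hσ 𝒰 h𝒰 n).1, (hσ 𝒰 h𝒰 n).2, fun x hx => hx 𝒰 h𝒰⟩,
    Set.eq_univ_of_forall fun x => ?_⟩⟩
  by_contra hx
  have h1 : ∀ n, ∃ 𝒰, 𝒰 ∈ openCovers X ∧ x ∉ ⋃₀ σ 𝒰 n := by
    intro n
    by_contra hn
    push Not at hn
    exact hx (Set.mem_iUnion.2 ⟨n, subset_closure hn⟩)
  choose A hA hxA using h1
  have hc : x ∈ ⋃₀ ⋃ n, σ (A n) n := (hwin A hA).2 ▸ Set.mem_univ x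
  obtain ⟨U, hU, hxU⟩ := hc
  obtain ⟨n, hn⟩ := Set.mem_iUnion.1 hU
  exact hxA n ⟨U, hn, hxU⟩

/-- For regular `X`, TFAE: (i) `X` is σ-compact; (ii) II has a
winning Markov strategy in `G_fin(Ω_X, Ω_X)`; (iii) II has a winning Markov
strategy in `G_fin(𝒪_X, 𝒪_X)`. -/
theorem statement7 (X : Type*) [TopologicalSpace X] [RegularSpace X] :
    List.TFAE [SigmaCompactSpace X,
      WinMarkovFin (omegaCovers X) (omegaCovers X),
      WinMarkovFin (openCovers X) (openCovers X)] := by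
  tfae_have 1 → 2 := fun _ => aux12
  tfae_have 2 → 3 := aux23
  tfae_have 3 → 1 := aux31
  tfae_finish
end

section
/- Player II has a winning strategy in the ω-Menger game G_fin(Ω_{L(ω₁)}, Ω_{L(ω₁)}) on the one-point Lindelöfication L(ω₁) of the discrete space of size ℵ₁. -/
open TopologicalSpace Cardinal

namespace LStrat
open Classical in
/-- Finite set to be covered, given the list of earlier selections. -/
noncomputable def fin {X : Type*} (e : Set X → ℕ → X) (x : X) (L : List (Set X)) : Finset X :=
  insert x (L.toFinset.biUnion fun S => (Finset.range L.length).image (e S))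

/-- The list of selections after `n` rounds. -/
noncomputable def hist {X : Type*} (pick : Set (Set X) → Finset X → Set X)
    (e : Set X → ℕ → X) (x : X) (A : ℕ → Set (Set X)) : ℕ → List (Set X)
  | 0 => []
  | n + 1 => pick (A n) (fin e x (hist pick e x A n)) :: hist pick e x A n

theorem hist_length {X : Type*} (pick : Set (Set X) → Finset X → Set X)
    (e : Set X → ℕ → X) (x : X) (A : ℕ → Set (Set X)) (n : ℕ) :
    (hist pick e x A n).length = n := by
  induction n with
  | zero => rfl
  | succ n ih => simp [hist, ih]

theorem hist_congr {X : Type*} (pick : Set (Set X) → Finset X → Set X)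
    (e : Set X → ℕ → X) (x : X) (A B : ℕ → Set (Set X)) (n : ℕ) (h : ∀ i < n, A i = B i) :
    hist pick e x A n = hist pick e x B n := by
  induction n with
  | zero => rfl
  | succ n ih => simp [hist, ih fun i hi => h i (by omega), h n (by omega)]

theorem mem_hist {X : Type*} (pick : Set (Set X) → Finset X → Set X)
    (e : Set X → ℕ → X) (x : X) (A : ℕ → Set (Set X)) (k n : ℕ) (h : k < n) :
    pick (A k) (fin e x (hist pick e x A k)) ∈ hist pick e x A n := by
  induction n with
  | zero => omega
  | succ n ih =>
    rcases Nat.lt_succ_iff_lt_or_eq.1 h with h | rfl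
    · simp [hist, ih h]
    · simp [hist]

theorem main (α : Type*) :
    WinStratFin (@omegaCovers (Option α) (lindTop α))
      (@omegaCovers (Option α) (lindTop α)) := by
  classical
  have h1 : ∀ (A : Set (Set (Option α))) (F : Finset (Option α)), ∃ U,
      A ∈ @omegaCovers (Option α) (lindTop α) → U ∈ A ∧ (F : Set (Option α)) ⊆ U := by
    intro A F
    by_cases hA : A ∈ @omegaCovers (Option α) (lindTop α)
    · obtain ⟨U, hU⟩ := hA.2.2 F F.finite_toSet
      exact ⟨U, fun _ => hU⟩
    · exact ⟨∅, fun h => absurd h hA⟩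
  choose pick hpick using h1
  have h2 : ∀ S : Set (Option α), ∃ f : ℕ → Option α, S.Countable → Sᶜᶜ ⊆ Set.range f := by
    intro S
    by_cases hS : S.Countable
    · obtain ⟨f, hf⟩ := Set.countable_iff_exists_subset_range.1 hS
      exact ⟨f, fun _ => by simpa using hf⟩
    · exact ⟨fun _ => none, fun h => absurd h hS⟩
  choose e₀ he₀ using h2
  let e : Set (Option α) → ℕ → Option α := fun S => e₀ Sᶜ
  have he : ∀ S : Set (Option α), Sᶜ.Countable → ∀ x ∉ S, ∃ j, e S j = x := by
    intro S hS x hx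
    exact he₀ Sᶜ hS (by simpa using hx)
  refine ⟨fun n s => {pick (s (Fin.last n))
    (fin e none (hist pick e none (fun i => s ⟨min i n, by omega⟩) n))}, ?_, ?_⟩
  · intro n s hs
    exact ⟨Set.finite_singleton _, Set.singleton_subset_iff.2 (hpick _ _ (hs _)).1⟩
  · intro A hA
    have key : ∀ n, pick (A n) (fin e none (hist pick e none (fun i => A (min i n)) n)) =
        pick (A n) (fin e none (hist pick e none A n)) := by
      intro n
      rw [hist_congr pick e none (fun i => A (min i n)) A n]
      intro i hi
      simp [min_eq_left hi.le]
    simp only [Fin.val_last, key]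
    set u : ℕ → Set (Option α) := fun n => pick (A n) (fin e none (hist pick e none A n)) with hu
    have hmem : ∀ n, u n ∈ A n := fun n => (hpick _ _ (hA n)).1
    have hsub : ∀ n, ((fin e none (hist pick e none A n) : Finset _) : Set (Option α)) ⊆ u n :=
      fun n => (hpick _ _ (hA n)).2
    have hnone : ∀ n, none ∈ u n := fun n => hsub n (by simp [fin])
    have hcount : ∀ n, (u n)ᶜ.Countable := fun n => (hA n).1 _ (hmem n) (hnone n)
    have hone : ∀ x, ∃ N, ∀ n ≥ N, x ∈ u n := by
      intro x
      by_cases hx : ∀ n, x ∈ u n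
      · exact ⟨0, fun n _ => hx n⟩
      · push Not at hx
        obtain ⟨k, hk⟩ := hx
        obtain ⟨j, hj⟩ := he _ (hcount k) x hk
        refine ⟨k + j + 1, fun n hn => hsub n ?_⟩
        simp only [fin, Finset.coe_insert, Set.mem_insert_iff, Finset.mem_coe,
          Finset.mem_biUnion, List.mem_toFinset, Finset.mem_image, Finset.mem_range, hist_length]
        exact Or.inr ⟨u k, mem_hist pick e none A k n (by omega), j, by omega, hj⟩
    have hfin : ∀ F : Set (Option α), F.Finite → ∃ U ∈ ⋃ n, {u n}, F ⊆ U := by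
      intro F hF
      choose N hN using hone
      obtain ⟨M, hM⟩ := (hF.image N).bddAbove
      exact ⟨u M, Set.mem_iUnion.2 ⟨M, rfl⟩,
        fun x hx => hN x M (hM (Set.mem_image_of_mem N hx))⟩
    refine ⟨?_, ?_, hfin⟩
    · intro U hU
      obtain ⟨n, rfl⟩ := Set.mem_iUnion.1 hU
      exact (hA n).1 _ (hmem n)
    · refine Set.eq_univ_of_forall fun x => ?_
      obtain ⟨U, hU, hx⟩ := hfin {x} (Set.finite_singleton x)
      exact ⟨U, hU, hx rfl⟩

end LStrat

/-- II has a winning strategy in the ω-Menger game on the one-point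
Lindelöfication of the discrete space of size `ℵ₁`. -/
theorem statement8 {α : Type*} (hα : #α = aleph 1) :
    WinStratFin (@omegaCovers (Option α) (lindTop α))
      (@omegaCovers (Option α) (lindTop α)) := by
  exact LStrat.main α
end

section
/- The one-point Lindelöfication L(ω₁) of the discrete space of size ℵ₁ is not σ-compact, and Player II does not have a winning Markov strategy in the ω-Menger game G_fin(Ω_{L(ω₁)}, Ω_{L(ω₁)}). -/
open TopologicalSpace Cardinal

theorem aux_cover {α : Type*} (S : Set (Option α)) (hS : S.Infinite) :
    ∃ 𝒰 ∈ (@omegaCovers (Option α) (lindTop α)),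
      ∀ T : Set (Set (Option α)), T.Finite → T ⊆ 𝒰 → ¬ S ⊆ ⋃₀ T := by
  have hS' : (S \ {none}).Infinite := hS.sdiff (Set.finite_singleton _)
  let f := hS'.natEmbedding
  let C : Set (Option α) := Set.range (fun n => (f n : Option α))
  have hCc : C.Countable := Set.countable_range _
  have hCi : C.Infinite :=
    Set.infinite_range_of_injective (Subtype.val_injective.comp f.injective)
  have hCS : C ⊆ S := by
    rintro _ ⟨n, rfl⟩
    exact (f n).2.1
  have key : ∀ F : Set (Option α), F.Finite →
      ∃ U ∈ {U : Set (Option α) | Cᶜ ⊆ U ∧ (U ∩ C).Finite}, F ⊆ U := by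
    intro F hF
    refine ⟨Cᶜ ∪ F, ⟨Set.subset_union_left, hF.subset ?_⟩, Set.subset_union_right⟩
    rintro x ⟨h | h, hx⟩
    · exact absurd hx h
    · exact h
  refine ⟨{U | Cᶜ ⊆ U ∧ (U ∩ C).Finite}, ⟨?_, ?_, key⟩, ?_⟩
  · rintro U ⟨hU, -⟩ -
    exact hCc.mono (Set.compl_subset_comm.mp hU)
  · refine Set.eq_univ_of_forall fun x => ?_
    obtain ⟨U, hU, hx⟩ := key {x} (Set.finite_singleton x)
    exact ⟨U, hU, hx rfl⟩
  · intro T hT hTU hST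
    refine hCi ((hT.biUnion (fun U hU => (hTU hU).2)).subset ?_)
    intro x hx
    obtain ⟨U, hU, hxU⟩ := hST (hCS hx)
    exact Set.mem_biUnion hU ⟨hxU, hx⟩

theorem aux_inf {α : Type*} (hα : #α = aleph 1) (R : ℕ → Set (Option α))
    (hR : ∀ x, ∃ n, x ∈ R n) : ∃ n, (R n).Infinite := by
  by_contra h
  have h2 : ∀ n, (R n).Finite := fun n => by
    by_contra h'
    exact h ⟨n, h'⟩
  have h3 : (Set.univ : Set (Option α)).Countable := by
    refine (Set.countable_iUnion (fun n => (h2 n).countable)).mono ?_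
    intro x _
    exact Set.mem_iUnion.mpr (hR x)
  have h4 : Countable (Option α) := Set.countable_univ_iff.mp h3
  have h5 : Countable α := (Option.some_injective α).countable
  have h6 := Cardinal.mk_le_aleph0 (α := α)
  rw [hα] at h6
  exact absurd h6 (not_le.mpr Cardinal.aleph0_lt_aleph_one)

/-- the one-point Lindelöfication of the discrete space of size
`ℵ₁` is not σ-compact, and II has no winning Markov strategy in its ω-Menger
game. -/
theorem statement9 {α : Type*} (hα : #α = aleph 1) :
    ¬ @SigmaCompactSpace (Option α) (lindTop α) ∧
    ¬ WinMarkovFin (@omegaCovers (Option α) (lindTop α))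
        (@omegaCovers (Option α) (lindTop α)) := by
  constructor
  · intro hs
    letI := lindTop α
    obtain ⟨n, hn⟩ := aux_inf hα (compactCovering (Option α)) exists_mem_compactCovering
    obtain ⟨𝒰, ⟨ho, hc, -⟩, hT⟩ := aux_cover _ hn
    obtain ⟨T, hT1, hT2, hT3⟩ :=
      (isCompact_compactCovering (Option α) n).elim_finite_subcover_image (b := 𝒰) (c := id)
        ho (by simp only [id]; rw [← Set.sUnion_eq_biUnion (s := 𝒰), hc]; exact Set.subset_univ _)
    refine hT T hT2 hT1 ?_
    rw [Set.sUnion_eq_biUnion]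
    exact hT3
  · rintro ⟨σ, hσ, hw⟩
    obtain ⟨n, hn⟩ := aux_inf hα
      (fun n => {x | ∀ 𝒰 ∈ (@omegaCovers (Option α) (lindTop α)), x ∈ ⋃₀ σ 𝒰 n}) (by
        intro x
        by_contra! h
        have h' : ∀ n, ∃ 𝒰 ∈ (@omegaCovers (Option α) (lindTop α)), x ∉ ⋃₀ σ 𝒰 n := by
          intro n
          by_contra! h2
          exact h n h2
        choose A hA hx using h'
        have hcov := (hw A hA).2.1
        have hxm : x ∈ ⋃₀ (⋃ n, σ (A n) n) := by rw [hcov]; trivial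
        obtain ⟨U, hU, hxU⟩ := hxm
        obtain ⟨n, hn⟩ := Set.mem_iUnion.mp hU
        exact hx n ⟨U, hn, hxU⟩)
    obtain ⟨𝒰, hU, hT⟩ := aux_cover _ hn
    exact hT (σ 𝒰 n) (hσ 𝒰 hU n).1 (hσ 𝒰 hU n).2 (fun x hx => hx 𝒰 hU)
end

section
/- Player II has a winning strategy in the strong ω-Menger (ω-Rothberger) game G_1(Ω_{L(ω₁)}, Ω_{L(ω₁)}) on the one-point Lindelöfication L(ω₁) of the discrete space of size ℵ₁, where Player II selects a single open set from each ω-cover played by Player I and wins iff the collection of selected sets is an ω-cover. -/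
open TopologicalSpace Cardinal

/-- The list of II's first `n` moves. -/
noncomputable def movesList {X : Type*} (pick : Set (Set X) → List (Set X) → Set X)
    (A : ℕ → Set (Set X)) : ℕ → List (Set X)
  | 0 => []
  | n + 1 => pick (A n) (movesList pick A n) :: movesList pick A n

theorem movesList_congr {X : Type*} (pick : Set (Set X) → List (Set X) → Set X)
    (A B : ℕ → Set (Set X)) (n : ℕ) (h : ∀ k < n, A k = B k) :
    movesList pick A n = movesList pick B n := by
  induction n with
  | zero => rfl
  | succ n ih =>
    simp only [movesList]
    rw [ih (fun k hk => h k (by omega)), h n (by omega)]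

theorem movesList_length {X : Type*} (pick : Set (Set X) → List (Set X) → Set X)
    (A : ℕ → Set (Set X)) (n : ℕ) : (movesList pick A n).length = n := by
  induction n with
  | zero => rfl
  | succ n ih => simp [movesList, ih]

theorem movesList_mem {X : Type*} (pick : Set (Set X) → List (Set X) → Set X)
    (A : ℕ → Set (Set X)) (k n : ℕ) (h : k < n) :
    pick (A k) (movesList pick A k) ∈ movesList pick A n := by
  induction n with
  | zero => omega
  | succ n ih =>
    simp only [movesList, List.mem_cons]
    rcases Nat.lt_succ_iff_lt_or_eq.mp h with h | rfl
    · exact Or.inr (ih h)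
    · exact Or.inl rfl

/-- II has a winning strategy in the ω-Rothberger game
`G_1(Ω, Ω)` on the one-point Lindelöfication of the discrete space of size
`ℵ₁`. -/
theorem statement10 {α : Type*} (hα : #α = aleph 1) :
    WinStratOne (@omegaCovers (Option α) (lindTop α))
      (@omegaCovers (Option α) (lindTop α)) := by
  classical
  have he : ∀ V : Set (Option α), ∃ e : ℕ → Option α, Vᶜ.Countable → Vᶜ ⊆ Set.range e := by
    intro V
    by_cases hV : Vᶜ.Countable
    · obtain ⟨e, h⟩ := Set.countable_iff_exists_subset_range.mp hV
      exact ⟨e, fun _ => h⟩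
    · exact ⟨fun _ => none, fun h => absurd h hV⟩
  choose e he using he
  let F : List (Set (Option α)) → Set (Option α) := fun L =>
    insert none (⋃ V ∈ {V | V ∈ L}, e V '' Set.Iio L.length)
  have hF : ∀ L, (F L).Finite := by
    intro L
    exact (Set.Finite.biUnion (List.finite_toSet L)
      (fun V _ => (Set.finite_Iio _).image _)).insert _
  have hp : ∀ (A : Set (Set (Option α))) (L : List (Set (Option α))), ∃ U,
      A ∈ @omegaCovers (Option α) (lindTop α) → U ∈ A ∧ F L ⊆ U := by
    intro A L
    by_cases hA : A ∈ @omegaCovers (Option α) (lindTop α)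
    · obtain ⟨U, h⟩ := hA.2.2 (F L) (hF L)
      exact ⟨U, fun _ => h⟩
    · exact ⟨∅, fun h => absurd h hA⟩
  choose pick hpick using hp
  refine ⟨fun n s => pick (s (Fin.last n))
    (movesList pick (fun k => if h : k < n + 1 then s ⟨k, h⟩ else ∅) n), ?_, ?_⟩
  · intro n s hs
    exact (hpick _ _ (hs _)).1
  · intro A hA
    have hU : ∀ n, pick (A (Fin.last n : Fin (n + 1))) (movesList pick
        (fun k => if h : k < n + 1 then A (⟨k, h⟩ : Fin (n + 1)) else ∅) n) =
        pick (A n) (movesList pick A n) := by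
      intro n
      congr 1
      apply movesList_congr
      intro k hk
      simp [show k < n + 1 by omega]
    simp only [hU]
    set U : ℕ → Set (Option α) := fun n => pick (A n) (movesList pick A n) with hUdef
    have hUA : ∀ n, U n ∈ A n := fun n => (hpick _ _ (hA n)).1
    have hUF : ∀ n, F (movesList pick A n) ⊆ U n := fun n => (hpick _ _ (hA n)).2
    have hopen : ∀ n, none ∈ U n → (U n)ᶜ.Countable := fun n => (hA n).1 _ (hUA n)
    have hcount : ∀ n, (U n)ᶜ.Countable :=
      fun n => hopen n (hUF n (Set.mem_insert _ _))
    have hev : ∀ x, ∀ᶠ n in Filter.atTop, x ∈ U n := by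
      intro x
      by_cases hx : ∀ n, x ∈ U n
      · exact Filter.Eventually.of_forall hx
      · push Not at hx
        obtain ⟨k, hk⟩ := hx
        obtain ⟨j, hj⟩ := he _ (hcount k) hk
        filter_upwards [Filter.eventually_gt_atTop k, Filter.eventually_gt_atTop j] with m hm hm'
        apply hUF m
        refine Set.mem_insert_of_mem _ ?_
        refine Set.mem_biUnion (movesList_mem pick A k m hm) ⟨j, ?_, hj⟩
        rw [movesList_length]
        exact hm'
    have hfin : ∀ G : Set (Option α), G.Finite → ∃ n, G ⊆ U n := by
      intro G hG
      exact ((Filter.eventually_all_finite hG).mpr (fun x _ => hev x)).exists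
    refine ⟨?_, ?_, ?_⟩
    · rintro _ ⟨n, rfl⟩
      exact hopen n
    · refine Set.eq_univ_of_forall fun x => ?_
      obtain ⟨n, hn⟩ := (hev x).exists
      exact ⟨U n, ⟨n, rfl⟩, hn⟩
    · intro G hG
      obtain ⟨n, hn⟩ := hfin G hG
      exact ⟨U n, ⟨n, rfl⟩, hn⟩
end

section
/- For a countable topological space X, Player II has a winning strategy in the selective separability game G_fin(𝒟_X, 𝒟_X) if and only if Player II has a winning Markov strategy in G_fin(𝒟_X, 𝒟_X). -/
open TopologicalSpace Cardinal

open Classical in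
/-- Canonical runs coded by lists of finite sets (most recent answer first). -/
noncomputable def posAux {X : Type*} (𝒜 : Set (Set X))
    (σ : (n : ℕ) → (Fin (n + 1) → Set X) → Set X) (D₀ : Set X) :
    List (Finset X) → ℕ → Set X
  | [] => fun _ => D₀
  | F :: t =>
    Function.update (posAux 𝒜 σ D₀ t) t.length
      (if h : ∃ D ∈ 𝒜, σ t.length
          (fun i => Function.update (posAux 𝒜 σ D₀ t) t.length D i) = (F : Set X)
        then h.choose else D₀)

theorem posAux_mem {X : Type*} (𝒜 : Set (Set X))
    (σ : (n : ℕ) → (Fin (n + 1) → Set X) → Set X) (D₀ : Set X) (h₀ : D₀ ∈ 𝒜)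
    (t : List (Finset X)) (n : ℕ) : posAux 𝒜 σ D₀ t n ∈ 𝒜 := by
  induction t generalizing n with
  | nil => exact h₀
  | cons F t ih =>
    simp only [posAux]
    rw [Function.update_apply]
    split_ifs with h1 h2
    · exact h2.choose_spec.1
    · exact h₀
    · exact ih n

theorem posAux_spec {X : Type*} (𝒜 : Set (Set X))
    (σ : (n : ℕ) → (Fin (n + 1) → Set X) → Set X) (D₀ : Set X)
    (t : List (Finset X)) (F : Finset X)
    (h : ∃ D ∈ 𝒜, σ t.length
          (fun i => Function.update (posAux 𝒜 σ D₀ t) t.length D i) = (F : Set X)) :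
    σ t.length (fun i => posAux 𝒜 σ D₀ (F :: t) i) = (F : Set X) := by
  simp only [posAux]
  rw [dif_pos h]
  exact h.choose_spec.2

theorem strat_to_markov {X : Type*} [Countable X] (𝒜 ℬ : Set (Set X)) (D₀ : Set X)
    (h₀ : D₀ ∈ 𝒜) (hup : ∀ s ∈ ℬ, ∀ t, s ⊆ t → t ∈ ℬ) (H : WinStratFin 𝒜 ℬ) :
    WinMarkovFin 𝒜 ℬ := by
  classical
  obtain ⟨σ, hσ, hw⟩ := H
  obtain ⟨e, he⟩ := exists_surjective_nat (List (Finset X))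
  let P := posAux 𝒜 σ D₀
  let τ : List (Finset X) → Set X → Set X := fun t D =>
    σ t.length (fun i => Function.update (P t) t.length D i)
  have hτ : ∀ t, ∀ D ∈ 𝒜, (τ t D).Finite ∧ τ t D ⊆ D := by
    intro t D hD
    have := hσ t.length (fun i => Function.update (P t) t.length D i) (by
      intro i
      simp only [Function.update_apply]
      split_ifs
      · exact hD
      · exact posAux_mem 𝒜 σ D₀ h₀ t _)
    simpa [τ] using this
  refine ⟨fun D k => τ (e k) D, fun D hD k => hτ _ D hD, ?_⟩
  intro A hA
  choose k hk using he
  have hF : ∀ t, ∃ F : Finset X, (F : Set X) = τ t (A (k t)) := fun t =>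
    ⟨(hτ t (A (k t)) (hA _)).1.toFinset, by simp⟩
  choose F hF using hF
  let T : ℕ → List (Finset X) := fun n => Nat.rec [] (fun _ t => F t :: t) n
  have hT : ∀ n, T (n + 1) = F (T n) :: T n := fun n => rfl
  have hlen : ∀ n, (T n).length = n := by
    intro n
    induction n with
    | zero => rfl
    | succ n ih => rw [hT]; simp [ih]
  have hB : ∀ m i, i < m → P (T m) i = P (T (i + 1)) i := by
    intro m i him
    induction m, him using Nat.le_induction with
    | base => rfl
    | succ m hm ih =>
      rw [← ih, hT]
      have : i ≠ (T m).length := by rw [hlen]; omega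
      simp only [P, posAux, Function.update_of_ne this]
  refine hup _ (hw (fun i => P (T (i + 1)) i) fun n => posAux_mem 𝒜 σ D₀ h₀ _ _) _ ?_
  refine Set.iUnion_subset fun n => ?_
  have h1 : (fun i : Fin (n + 1) => P (T ((i : ℕ) + 1)) i) =
      fun i : Fin (n + 1) => P (T (n + 1)) i := by
    funext i
    exact (hB _ _ i.2).symm
  have h2 := posAux_spec 𝒜 σ D₀ (T n) (F (T n)) ⟨A (k (T n)), hA _, (hF (T n)).symm⟩
  rw [hlen, ← hT] at h2
  rw [h1]
  change σ n (fun i => posAux 𝒜 σ D₀ (T (n + 1)) i) ⊆ _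
  rw [h2, hF]
  refine Set.Subset.trans ?_ (Set.subset_iUnion _ (k (T n)))
  simp only [hk]
  exact subset_rfl

/-- for countable `X`, II wins `G_fin(𝒟_X, 𝒟_X)` iff II wins it
with a Markov strategy. -/
theorem statement13 (X : Type*) [TopologicalSpace X] [Countable X] :
    WinStratFin (denseFamily X) (denseFamily X) ↔
      WinMarkovFin (denseFamily X) (denseFamily X) := by
  constructor
  · exact strat_to_markov _ _ Set.univ dense_univ (fun s hs t hst => Dense.mono hst hs)
  · rintro ⟨τ, h1, h2⟩
    refine ⟨fun n s => τ (s (Fin.last n)) n, fun n s hs => h1 _ (hs _) n, fun A hA => ?_⟩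
    simpa using h2 A hA
end

section
/- For a second-countable topological space X, Player II has a winning strategy in the ω-Menger game G_fin(Ω_X, Ω_X) if and only if Player II has a winning Markov strategy in G_fin(Ω_X, Ω_X). -/
open TopologicalSpace Cardinal

theorem exists_omega_base (X : Type*) [TopologicalSpace X] [SecondCountableTopology X] :
    ∃ B : Set (Set X), B.Countable ∧ (∀ V ∈ B, IsOpen V) ∧
      ∀ U : Set X, IsOpen U → ∀ F : Set X, F.Finite → F ⊆ U → ∃ V ∈ B, F ⊆ V ∧ V ⊆ U := by
  have hb := isBasis_countableBasis X
  refine ⟨Set.sUnion '' {S : Set (Set X) | S.Finite ∧ S ⊆ countableBasis X},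
    (Set.countable_ofPred_finite_subset (countable_countableBasis X)).image _, ?_, ?_⟩
  · rintro _ ⟨S, ⟨-, hS⟩, rfl⟩
    exact isOpen_sUnion fun t ht => hb.isOpen (hS ht)
  · intro U hU F hF hFU
    have h : ∀ x, x ∈ F → ∃ v, v ∈ countableBasis X ∧ x ∈ v ∧ v ⊆ U := fun x hx => by
      obtain ⟨v, h1, h2, h3⟩ := hb.exists_subset_of_mem_open (hFU hx) hU
      exact ⟨v, h1, h2, h3⟩
    choose! f hf using h
    refine ⟨⋃₀ (f '' F), ⟨f '' F, ⟨hF.image _, ?_⟩, rfl⟩, ?_, ?_⟩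
    · rintro _ ⟨x, hx, rfl⟩
      exact (hf x hx).1
    · intro x hx
      exact ⟨f x, ⟨x, hx, rfl⟩, (hf x hx).2.1⟩
    · rintro y ⟨_, ⟨x, hx, rfl⟩, hy⟩
      exact (hf x hx).2.2 hy

theorem isOmegaCover_mk {X : Type*} [TopologicalSpace X] {A : Set (Set X)}
    (h1 : ∀ U ∈ A, IsOpen U) (h2 : ∀ F : Set X, F.Finite → ∃ U ∈ A, F ⊆ U) :
    A ∈ omegaCovers X := by
  refine ⟨h1, ?_, h2⟩
  refine Set.eq_univ_of_forall fun x => ?_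
  obtain ⟨U, hU, hx⟩ := h2 {x} (Set.finite_singleton x)
  exact ⟨U, hU, hx rfl⟩

theorem omega_strat_to_markov (X : Type*) [TopologicalSpace X] [SecondCountableTopology X]
    (H : WinStratFin (omegaCovers X) (omegaCovers X)) :
    WinMarkovFin (omegaCovers X) (omegaCovers X) := by
  obtain ⟨σ, hσ, hwin⟩ := H
  obtain ⟨B, hBc, hBo, hB⟩ := exists_omega_base X
  let τ : List (Set (Set X)) → Set (Set X) → Set (Set X) := fun l A =>
    σ l.length (fun i => (A :: l).reverse.getD i ∅)
  have hτ : ∀ l : List (Set (Set X)), (∀ a ∈ l, a ∈ omegaCovers X) → ∀ A ∈ omegaCovers X,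
      (τ l A).Finite ∧ τ l A ⊆ A := by
    intro l hl A hA
    have := hσ l.length (fun i => (A :: l).reverse.getD i ∅) (by
      intro i
      have hi : (i : ℕ) < (A :: l).reverse.length := by simp [i.2]
      simp only [List.getD_eq_getElem _ _ hi]
      have hm := List.getElem_mem hi
      rw [List.mem_reverse, List.mem_cons] at hm
      rcases hm with hm | hm
      · rw [hm]; exact hA
      · exact hl _ hm)
    refine ⟨this.1, this.2.trans ?_⟩
    simp
  have hBcov : B ∈ omegaCovers X := isOmegaCover_mk hBo fun F hF => by
    obtain ⟨V, hV, h, -⟩ := hB Set.univ isOpen_univ F hF (Set.subset_univ _)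
    exact ⟨V, hV, h⟩
  have hg : ∀ l : List (Set (Set X)), (∀ a ∈ l, a ∈ omegaCovers X) →
      ∃ g : ℕ → Set (Set X), (∀ k, g k ∈ omegaCovers X) ∧
        ∀ A ∈ omegaCovers X, A ⊆ B → ∃ k, τ l (g k) = τ l A := by
    intro l hl
    have hc : (τ l '' {A | A ∈ omegaCovers X ∧ A ⊆ B}).Countable := by
      refine (Set.countable_ofPred_finite_subset hBc).mono ?_
      rintro _ ⟨A, ⟨hA, hAB⟩, rfl⟩
      exact ⟨(hτ l hl A hA).1, (hτ l hl A hA).2.trans hAB⟩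
    obtain ⟨f, hf⟩ := hc.exists_eq_range ⟨_, B, ⟨hBcov, subset_rfl⟩, rfl⟩
    have hk : ∀ k, ∃ A, (A ∈ omegaCovers X ∧ A ⊆ B) ∧ τ l A = f k := fun k => by
      have : f k ∈ τ l '' {A | A ∈ omegaCovers X ∧ A ⊆ B} := hf ▸ Set.mem_range_self k
      exact this
    choose g hg using hk
    refine ⟨g, fun k => (hg k).1.1, fun A hA hAB => ?_⟩
    have : τ l A ∈ Set.range f := hf ▸ ⟨A, ⟨hA, hAB⟩, rfl⟩
    obtain ⟨k, hk⟩ := this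
    exact ⟨k, (hg k).2.trans hk⟩
  choose! g hgcov hgA using hg
  let s : List ℕ → List (Set (Set X)) := fun t => t.rec [] (fun k _ r => g r k :: r)
  have hs0 : s [] = [] := rfl
  have hs1 : ∀ k t, s (k :: t) = g (s t) k :: s t := fun _ _ => rfl
  have hs : ∀ t, ∀ a ∈ s t, a ∈ omegaCovers X := by
    intro t
    induction t with
    | nil => intro a ha; rw [hs0] at ha; simp at ha
    | cons k t ih =>
      intro a ha
      rw [hs1, List.mem_cons] at ha
      rcases ha with rfl | ha
      · exact hgcov _ ih k
      · exact ih a ha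
  have key : ∀ F : Set X, F.Finite → ∃ t, ∀ k, ∃ V ∈ τ (s t) (g (s t) k), F ⊆ V := by
    intro F hF
    by_contra hcon
    push Not at hcon
    choose κ hκ using hcon
    let T : ℕ → List ℕ := fun n => n.rec [] (fun _ t => κ t :: t)
    have hT1 : ∀ n, T (n + 1) = κ (T n) :: T n := fun _ => rfl
    let C : ℕ → Set (Set X) := fun n => g (s (T n)) (κ (T n))
    have hL : ∀ n, (s (T n)).reverse = (List.range n).map C := by
      intro n
      induction n with
      | zero => rfl
      | succ n ih => rw [hT1, hs1, List.reverse_cons, ih, List.range_succ, List.map_append]; rfl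
    have hC : ∀ n, C n ∈ omegaCovers X := fun n => hgcov _ (hs _) _
    obtain ⟨U, hU, hFU⟩ := (hwin C hC).2.2 F hF
    obtain ⟨n, hn⟩ := Set.mem_iUnion.1 hU
    refine hκ (T n) U ?_ hFU
    have hlen : (s (T n)).length = n := by
      rw [← List.length_reverse, hL]; simp
    have hrev : (C n :: s (T n)).reverse = (List.range (n+1)).map C := hL (n+1)
    have : ∀ m, m = n → σ m (fun i => (C n :: s (T n)).reverse.getD i ∅)
        = σ n (fun i => C i) := by
      rintro m rfl
      congr 1
      funext i
      rw [hrev, List.getD_eq_getElem _ _ (by simpa using Nat.lt_succ_iff.1 i.2)]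
      simp
    change U ∈ σ (s (T n)).length (fun i => (C n :: s (T n)).reverse.getD i ∅)
    rw [this _ hlen]
    exact hn
  obtain ⟨e, he⟩ := exists_surjective_nat (List ℕ)
  let R : Set (Set X) → Set (Set X) := fun A => {V | V ∈ B ∧ ∃ U ∈ A, V ⊆ U}
  have hR : ∀ A ∈ omegaCovers X, R A ∈ omegaCovers X := by
    intro A hA
    refine isOmegaCover_mk (fun V hV => hBo V hV.1) fun F hF => ?_
    obtain ⟨U, hU, hFU⟩ := hA.2.2 F hF
    obtain ⟨V, hV, h1, h2⟩ := hB U (hA.1 U hU) F hF hFU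
    exact ⟨V, ⟨hV, U, hU, h2⟩, h1⟩
  have hh : ∀ (A : Set (Set X)) (V : Set X), V ∈ R A → ∃ U, U ∈ A ∧ V ⊆ U :=
    fun A V hV => hV.2
  choose! h hhA hhV using hh
  have hsub : ∀ A ∈ omegaCovers X, ∀ n, (h A '' τ (s (e n)) (R A)).Finite ∧
      h A '' τ (s (e n)) (R A) ⊆ A := by
    intro A hA n
    have := hτ _ (hs (e n)) _ (hR A hA)
    refine ⟨this.1.image _, ?_⟩
    rintro _ ⟨V, hV, rfl⟩
    exact hhA A V (this.2 hV)
  refine ⟨fun A n => h A '' τ (s (e n)) (R A), hsub, ?_⟩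
  intro A hA
  refine isOmegaCover_mk ?_ ?_
  · intro U hU
    obtain ⟨n, hn⟩ := Set.mem_iUnion.1 hU
    exact (hA n).1 U ((hsub _ (hA n) n).2 hn)
  · intro F hF
    obtain ⟨t, ht⟩ := key F hF
    obtain ⟨n, rfl⟩ := he t
    obtain ⟨k, hk⟩ := hgA _ (hs (e n)) (R (A n)) (hR _ (hA n)) (fun V hV => hV.1)
    obtain ⟨V, hV, hFV⟩ := ht k
    rw [hk] at hV
    exact ⟨h (A n) V, Set.mem_iUnion.2 ⟨n, V, hV, rfl⟩,
      hFV.trans (hhV _ V ((hτ _ (hs (e n)) _ (hR _ (hA n))).2 hV))⟩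

/-- for second-countable `X`, II wins `G_fin(Ω_X, Ω_X)` iff II
wins it with a Markov strategy. -/
theorem statement14 (X : Type*) [TopologicalSpace X] [SecondCountableTopology X] :
    WinStratFin (omegaCovers X) (omegaCovers X) ↔
      WinMarkovFin (omegaCovers X) (omegaCovers X) := by
  refine ⟨omega_strat_to_markov X, ?_⟩
  rintro ⟨μ, h1, h2⟩
  exact ⟨fun n s => μ (s (Fin.last n)) n, fun n s hs => h1 _ (hs _) n, fun A hA => by
    simpa using h2 A hA⟩
end

section
/- For a second-countable topological space X, Player II has a winning strategy in the Menger game G_fin(𝒪_X, 𝒪_X) if and only if Player II has a winning Markov strategy in G_fin(𝒪_X, 𝒪_X). -/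
open TopologicalSpace Cardinal

/-- `K` is finitely covered by each open cover of the whole space. -/
def RelCpt {X : Type*} [TopologicalSpace X] (K : Set X) : Prop :=
  ∀ A ∈ openCovers X, ∃ F : Set (Set X), F.Finite ∧ F ⊆ A ∧ K ⊆ ⋃₀ F

theorem markov_of_relCpt {X : Type*} [TopologicalSpace X] (f : ℕ → Set X)
    (hf : ∀ n, RelCpt (f n)) (hu : ∀ x, ∃ n, x ∈ f n) :
    WinMarkovFin (openCovers X) (openCovers X) := by
  classical
  have H : ∀ (A : Set (Set X)) (n : ℕ), ∃ F : Set (Set X),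
      A ∈ openCovers X → F.Finite ∧ F ⊆ A ∧ f n ⊆ ⋃₀ F := by
    intro A n
    by_cases h : A ∈ openCovers X
    · obtain ⟨F, hF⟩ := hf n A h
      exact ⟨F, fun _ => hF⟩
    · exact ⟨∅, fun h' => absurd h' h⟩
  choose σ hσ using H
  refine ⟨σ, fun A hA n => ⟨(hσ A n hA).1, (hσ A n hA).2.1⟩, fun A hA => ⟨?_, ?_⟩⟩
  · intro U hU
    obtain ⟨n, hn⟩ := Set.mem_iUnion.1 hU
    exact (hA n).1 U ((hσ (A n) n (hA n)).2.1 hn)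
  · refine Set.eq_univ_of_forall fun x => ?_
    obtain ⟨n, hn⟩ := hu x
    obtain ⟨U, hU, hx⟩ := (hσ (A n) n (hA n)).2.2 hn
    exact ⟨U, Set.mem_iUnion.2 ⟨n, hU⟩, hx⟩

theorem markov_of_strat (X : Type*) [TopologicalSpace X] [SecondCountableTopology X]
    (h : WinStratFin (openCovers X) (openCovers X)) :
    WinMarkovFin (openCovers X) (openCovers X) := by
  classical
  obtain ⟨σ, hσ, hwin⟩ := h
  obtain ⟨B, hBc, -, hB⟩ := TopologicalSpace.exists_countable_basis X
  let C : Set (Set (Set X)) := {U | U ∈ openCovers X ∧ U ⊆ B}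
  have hBC : B ∈ C := ⟨⟨fun U hU => hB.isOpen hU, hB.sUnion_eq⟩, subset_rfl⟩
  let τ : (ℕ → Set (Set X)) → ℕ → Set (Set X) → Set (Set X) :=
    fun g n U => σ n (fun i => Function.update g n U i)
  have hupd : ∀ (g : ℕ → Set (Set X)) (n : ℕ) (U : Set (Set X)), (∀ i, g i ∈ C) → U ∈ C → ∀ i, Function.update g n U i ∈ C := by
    intro g n U hg hU i
    by_cases hi : i = n
    · subst hi; simpa using hU
    · simpa [Function.update_of_ne hi] using hg i
  have hτ : ∀ g n U, (∀ i, g i ∈ C) → U ∈ C → (τ g n U).Finite ∧ τ g n U ⊆ U := by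
    intro g n U hg hU
    have := hσ n (fun i => Function.update g n U i) (fun i => (hupd g n U hg hU i).1)
    simpa [τ] using this
  have hE : ∀ (g : ℕ → Set (Set X)) (n : ℕ), ∃ E : Set (Set (Set X)), (∀ i, g i ∈ C) →
      E.Countable ∧ E ⊆ C ∧ ∀ U ∈ C, ∃ V ∈ E, τ g n V = τ g n U := by
    intro g n
    by_cases hg : ∀ i, g i ∈ C
    · have hc : (τ g n '' C).Countable := by
        refine (Set.countable_setOf_finite_subset hBc).mono ?_
        rintro _ ⟨U, hU, rfl⟩
        exact ⟨(hτ g n U hg hU).1, (hτ g n U hg hU).2.trans hU.2⟩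
      obtain ⟨E, hEC, hbij⟩ := (Set.surjOn_image (τ g n) C).exists_bijOn_subset
      refine ⟨E, fun _ => ⟨hbij.mapsTo.countable_of_injOn hbij.injOn hc, hEC, ?_⟩⟩
      intro U hU
      exact hbij.surjOn ⟨U, hU, rfl⟩
    · exact ⟨∅, fun h' => absurd h' hg⟩
  choose E hE using hE
  let T : ℕ → Set (ℕ → Set (Set X)) := fun n => Nat.rec {fun _ => B}
    (fun n S => ⋃ g ∈ S, (fun U => Function.update g n U) '' E g n) n
  have hTs : ∀ n, T (n+1) = ⋃ g ∈ T n, (fun U => Function.update g n U) '' E g n :=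
    fun n => rfl
  have hTC : ∀ n, ∀ g ∈ T n, ∀ i, g i ∈ C := by
    intro n
    induction n with
    | zero =>
      intro g hg i
      have : g = fun _ => B := hg
      subst this; exact hBC
    | succ n ih =>
      intro g hg
      rw [hTs] at hg
      simp only [Set.mem_iUnion] at hg
      obtain ⟨g', hg', U, hU, rfl⟩ := hg
      exact hupd g' n U (ih g' hg') ((hE g' n (ih g' hg')).2.1 hU)
  have hTc : ∀ n, (T n).Countable := by
    intro n
    induction n with
    | zero => exact Set.countable_singleton _
    | succ n ih =>
      rw [hTs]
      exact ih.biUnion fun g hg => (hE g n (hTC n g hg)).1.image _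
  let K : ℕ → (ℕ → Set (Set X)) → Set X := fun n g => {x | ∀ U ∈ C, x ∈ ⋃₀ τ g n U}
  have hK : ∀ n, ∀ g ∈ T n, RelCpt (K n g) := by
    intro n g hg A hA
    let U : Set (Set X) := {b | b ∈ B ∧ ∃ a ∈ A, b ⊆ a}
    have hU : U ∈ C := by
      refine ⟨⟨fun b hb => hB.isOpen hb.1, Set.eq_univ_of_forall fun x => ?_⟩, fun b hb => hb.1⟩
      have hx : x ∈ ⋃₀ A := by rw [hA.2]; trivial
      obtain ⟨a, ha, hxa⟩ := hx
      obtain ⟨b, hb, hxb, hba⟩ := hB.exists_subset_of_mem_open hxa (hA.1 a ha)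
      exact ⟨b, ⟨hb, a, ha, hba⟩, hxb⟩
    obtain ⟨hfin, hsub⟩ := hτ g n U (hTC n g hg) hU
    have hch : ∀ b : Set X, ∃ a, b ∈ U → a ∈ A ∧ b ⊆ a := by
      intro b
      by_cases hb : b ∈ U
      · obtain ⟨a, ha, h⟩ := hb.2
        exact ⟨a, fun _ => ⟨ha, h⟩⟩
      · exact ⟨∅, fun h => absurd h hb⟩
    choose r hr using hch
    refine ⟨r '' τ g n U, hfin.image _, ?_, ?_⟩
    · rintro _ ⟨b, hb, rfl⟩
      exact (hr b (hsub hb)).1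
    · intro x hx
      obtain ⟨b, hb, hxb⟩ := hx U hU
      exact ⟨r b, ⟨b, hb, rfl⟩, (hr b (hsub hb)).2 hxb⟩
  have hcov : ∀ x, ∃ n, ∃ g ∈ T n, x ∈ K n g := by
    intro x
    by_contra hcon
    push Not at hcon
    have step : ∀ n (g : T n), ∃ V, V ∈ E g.1 n ∧ x ∉ ⋃₀ τ g.1 n V := by
      intro n g
      have h1 := hcon n g.1 g.2
      simp only [K, Set.mem_setOf_eq, not_forall] at h1
      obtain ⟨U, hU, hx⟩ := h1
      obtain ⟨V, hV, hVU⟩ := (hE g.1 n (hTC n g.1 g.2)).2.2 U hU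
      exact ⟨V, hV, by rw [hVU]; exact hx⟩
    choose v hvE hvx using step
    let G : (n : ℕ) → T n := fun n => Nat.rec ⟨fun _ => B, rfl⟩
      (fun n g => ⟨Function.update g.1 n (v n g), by
        rw [hTs]
        exact Set.mem_biUnion g.2 ⟨_, hvE n g, rfl⟩⟩) n
    have hG : ∀ n, (G (n+1)).1 = Function.update (G n).1 n (v n (G n)) := fun n => rfl
    let A : ℕ → Set (Set X) := fun n => v n (G n)
    have hGA : ∀ m i, i < m → (G m).1 i = A i := by
      intro m
      induction m with
      | zero => intro i hi; omega
      | succ m ih =>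
        intro i hi
        rw [hG]
        by_cases him : i = m
        · subst him; simp [A]
        · rw [Function.update_of_ne him]; exact ih i (by omega)
    have hAC : ∀ n, A n ∈ openCovers X := fun n =>
      ((hE _ n (hTC n _ (G n).2)).2.1 (hvE n (G n))).1
    have hw := (hwin A hAC).2
    have hx : x ∈ ⋃₀ (⋃ n : ℕ, σ n (fun i => A i)) := by rw [hw]; trivial
    obtain ⟨U, hU, hxU⟩ := hx
    obtain ⟨n, hn⟩ := Set.mem_iUnion.1 hU
    apply hvx n (G n)
    refine ⟨U, ?_, hxU⟩
    have : (fun i : Fin (n+1) => A i) =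
        fun i : Fin (n+1) => Function.update (G n).1 n (v n (G n)) i := by
      funext i
      rw [← hG, hGA (n+1) i i.2]
    simp only [τ]
    rw [← this]
    exact hn
  have hS : (⋃ n, K n '' T n).Countable := Set.countable_iUnion fun n => (hTc n).image _
  have hne : (⋃ n, K n '' T n).Nonempty :=
    ⟨K 0 (fun _ => B), Set.mem_iUnion.2 ⟨0, _, rfl, rfl⟩⟩
  obtain ⟨f, hf⟩ := hS.exists_eq_range hne
  refine markov_of_relCpt f ?_ ?_
  · intro n
    have : f n ∈ ⋃ n, K n '' T n := by rw [hf]; exact ⟨n, rfl⟩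
    obtain ⟨m, g, hg, hgf⟩ := Set.mem_iUnion.1 this
    rw [← hgf]; exact hK m g hg
  · intro x
    obtain ⟨n, g, hg, hx⟩ := hcov x
    have : K n g ∈ Set.range f := by rw [← hf]; exact Set.mem_iUnion.2 ⟨n, g, hg, rfl⟩
    obtain ⟨m, hm⟩ := this
    exact ⟨m, by rw [hm]; exact hx⟩

/-- for second-countable `X`, II wins the Menger game
`G_fin(𝒪_X, 𝒪_X)` iff II wins it with a Markov strategy. -/
theorem statement15 (X : Type*) [TopologicalSpace X] [SecondCountableTopology X] :
    WinStratFin (openCovers X) (openCovers X) ↔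
      WinMarkovFin (openCovers X) (openCovers X) := by
  refine ⟨markov_of_strat X, ?_⟩
  rintro ⟨σ, h1, h2⟩
  exact ⟨fun n s => σ (s (Fin.last n)) n, fun n s hs => h1 _ (hs _) n,
    fun A hA => by simpa using h2 A hA⟩
end

section
/- Let 𝒜 be a family of sets such that ⋃𝒜 is countable, and let ℬ be a family of sets closed under supersets (if B ∈ ℬ and B ⊆ C then C ∈ ℬ). Then Player II has a winning strategy in the strong selection game G_1(𝒜,ℬ) if and only if Player II has a winning Markov strategy in G_1(𝒜,ℬ). -/
open TopologicalSpace Cardinal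

/-- Histories coded by lists of naturals (most recent move first). -/
def codedHist {α : Type*} (A₀ : Set α) (P : ℕ → (ℕ → Set α) → ℕ → Set α) :
    List ℕ → ℕ → Set α
  | [] => fun _ => A₀
  | k :: l => Function.update (codedHist A₀ P l) l.length (P l.length (codedHist A₀ P l) k)

/-- if `⋃𝒜` is countable and `ℬ` is closed under supersets, then
II wins `G_1(𝒜, ℬ)` iff II wins it with a Markov strategy. -/
theorem statement18 {α : Type*} (𝒜 ℬ : Set (Set α))
    (h𝒜 : (⋃₀ 𝒜).Countable)
    (hℬ : ∀ B ∈ ℬ, ∀ C : Set α, B ⊆ C → C ∈ ℬ) :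
    WinStratOne 𝒜 ℬ ↔ WinMarkovOne 𝒜 ℬ := by
  constructor
  · rintro ⟨σ, hσ, hw⟩
    rcases Set.eq_empty_or_nonempty 𝒜 with he | ⟨A₀, hA₀⟩
    · subst he
      exact ⟨fun _ _ => σ 0 (fun _ => ∅), fun A hA => absurd hA (Set.notMem_empty A),
        fun A hA => absurd (hA 0) (Set.notMem_empty _)⟩
    obtain ⟨c, hc⟩ := Set.countable_iff_exists_injOn.1 h𝒜
    let τ : ℕ → (ℕ → Set α) → Set α → α := fun n h A =>
      σ n (fun i => Function.update h n A i)
    have hτ : ∀ n h A, (∀ i, h i ∈ 𝒜) → A ∈ 𝒜 → τ n h A ∈ A := by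
      intro n h A hh hA
      have := hσ n (fun i => Function.update h n A i) (by
        intro i
        by_cases hi : (i : ℕ) = n
        · simp [hi, hA]
        · simp [Function.update_of_ne hi, hh])
      simpa using this
    have hP : ∀ n (h : ℕ → Set α) (k : ℕ), ∃ B ∈ 𝒜,
        (∃ A ∈ 𝒜, c (τ n h A) = k) → c (τ n h B) = k := by
      intro n h k
      by_cases hk : ∃ A ∈ 𝒜, c (τ n h A) = k
      · obtain ⟨A, hA, hk⟩ := hk
        exact ⟨A, hA, fun _ => hk⟩
      · exact ⟨A₀, hA₀, fun h => absurd h hk⟩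
    choose P hP𝒜 hPc using hP
    have hH : ∀ l i, codedHist A₀ P l i ∈ 𝒜 := by
      intro l
      induction l with
      | nil => intro i; exact hA₀
      | cons k l ih =>
        intro i
        simp only [codedHist]
        by_cases hi : i = l.length
        · subst hi; simpa using hP𝒜 _ _ _
        · rw [Function.update_of_ne hi]; exact ih i
    let dec : ℕ → List ℕ := fun n => (Encodable.decode (α := List ℕ) n).getD []
    have hdec : ∀ l, dec (Encodable.encode l) = l := by
      intro l; simp [dec]
    refine ⟨fun A n => τ (dec n).length (codedHist A₀ P (dec n)) A, ?_, ?_⟩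
    · intro A hA n
      exact hτ _ _ _ (hH _) hA
    · intro A hA
      let nd : ℕ → List ℕ := fun k => Nat.rec []
        (fun _ l => c (τ l.length (codedHist A₀ P l) (A (Encodable.encode l))) :: l) k
      have nd_succ : ∀ k, nd (k + 1) = c (τ (nd k).length (codedHist A₀ P (nd k))
        (A (Encodable.encode (nd k)))) :: nd k := fun k => rfl
      have nd_len : ∀ k, (nd k).length = k := by
        intro k
        induction k with
        | zero => rfl
        | succ k ih => rw [nd_succ, List.length_cons, ih]
      let B : ℕ → Set α := fun k => P k (codedHist A₀ P (nd k))
        (c (τ k (codedHist A₀ P (nd k)) (A (Encodable.encode (nd k)))))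
      have hB : ∀ k, B k ∈ 𝒜 := fun k => hP𝒜 _ _ _
      have hhist : ∀ k i, i < k → codedHist A₀ P (nd k) i = B i := by
        intro k
        induction k with
        | zero => intro i hi; omega
        | succ k ih =>
          intro i hi
          rw [nd_succ]
          simp only [codedHist, nd_len]
          by_cases hik : i = k
          · subst hik; simp [B]
          · rw [Function.update_of_ne hik]; exact ih i (by omega)
      refine hℬ _ (hw B hB) _ ?_
      rintro x ⟨k, rfl⟩
      refine ⟨Encodable.encode (nd k), ?_⟩
      simp only [hdec, nd_len]
      have h1 : σ k (fun i => B i) = τ k (codedHist A₀ P (nd k)) (B k) := by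
        simp only [τ]
        congr 1
        funext i
        by_cases hi : (i : ℕ) = k
        · simp [hi]
        · rw [Function.update_of_ne hi, hhist k i (by omega)]
      rw [h1]
      apply hc
      · exact ⟨B k, hB k, hτ _ _ _ (hH _) (hB k)⟩
      · exact ⟨_, hA _, hτ _ _ _ (hH _) (hA _)⟩
      · exact hPc k _ _ ⟨_, hA _, rfl⟩
  · rintro ⟨m, hm, hw⟩
    refine ⟨fun n s => m (s (Fin.last n)) n, fun n s hs => hm _ (hs _) n, ?_⟩
    intro A hA
    simpa using hw A hA
end

section
/- For a second-countable topological space X, Player II has a winning strategy in the Rothberger game G_1(𝒪_X, 𝒪_X) if and only if Player II has a winning Markov strategy in G_1(𝒪_X, 𝒪_X). -/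
open TopologicalSpace Cardinal

/-- for second-countable `X`, II wins the Rothberger game
`G_1(𝒪_X, 𝒪_X)` iff II wins it with a Markov strategy. -/
theorem statement19 (X : Type*) [TopologicalSpace X] [SecondCountableTopology X] :
    WinStratOne (openCovers X) (openCovers X) ↔
      WinMarkovOne (openCovers X) (openCovers X) := by
  classical
  constructor
  · rintro ⟨σ, hσ, hwin⟩
    have hcov : ({Set.univ} : Set (Set X)) ∈ openCovers X := by
      constructor
      · intro U hU
        rw [Set.mem_singleton_iff.1 hU]
        exact isOpen_univ
      · simp
    have key : ∀ (n : ℕ) (A : ℕ → openCovers X), ∃ x : X, ∀ U : Set X, IsOpen U → x ∈ U →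
        ∃ C : openCovers X,
          σ n (fun i => (Function.update A n C (i : ℕ) : Set (Set X))) = U := by
      intro n A
      by_contra hcon
      push Not at hcon
      choose U hUo hxU hU using hcon
      have hC : Set.range U ∈ openCovers X := by
        constructor
        · rintro _ ⟨x, rfl⟩
          exact hUo x
        · exact Set.eq_univ_of_forall fun x => ⟨U x, ⟨x, rfl⟩, hxU x⟩
      have h := hσ n (fun i => (Function.update A n ⟨_, hC⟩ (i : ℕ) : Set (Set X)))
        (fun i => Subtype.property _)
      simp only [Fin.val_last, Function.update_self] at h
      obtain ⟨x, hx⟩ := h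
      exact hU x ⟨_, hC⟩ hx.symm
    choose x hx using key
    have key2 : ∀ (n : ℕ) (A : ℕ → openCovers X) (k : countableBasis X),
        ∃ C : openCovers X, x n A ∈ (k : Set X) →
          σ n (fun i => (Function.update A n C (i : ℕ) : Set (Set X))) = k := by
      intro n A k
      by_cases h : x n A ∈ (k : Set X)
      · obtain ⟨C, hC⟩ := hx n A k (isOpen_of_mem_countableBasis k.2) h
        exact ⟨C, fun _ => hC⟩
      · exact ⟨⟨_, hcov⟩, fun h' => absurd h' h⟩
    choose C hC using key2
    let P : List (countableBasis X) → ℕ → openCovers X := fun l =>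
      List.rec (fun _ => ⟨_, hcov⟩)
        (fun k l A => Function.update A l.length (C l.length A k)) l
    have hP : ∀ k l, P (k :: l) =
        Function.update (P l) l.length (C l.length (P l) k) := fun _ _ => rfl
    have hD : ∀ y : X, ∃ l, ∀ U : Set X, IsOpen U → x l.length (P l) ∈ U → y ∈ U := by
      intro y
      by_contra hcon
      push Not at hcon
      have hcon' : ∀ l : List (countableBasis X), ∃ k : countableBasis X,
          x l.length (P l) ∈ (k : Set X) ∧ y ∉ (k : Set X) := by
        intro l
        obtain ⟨U, hU, hxU, hy⟩ := hcon l
        obtain ⟨V, hV, hxV, hVU⟩ :=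
          (isBasis_countableBasis X).exists_subset_of_mem_open hxU hU
        exact ⟨⟨V, hV⟩, hxV, fun h => hy (hVU h)⟩
      choose k hk hky using hcon'
      let b : ℕ → List (countableBasis X) := fun n => Nat.rec [] (fun _ l => k l :: l) n
      have hb : ∀ n, b (n + 1) = k (b n) :: b n := fun _ => rfl
      have hbl : ∀ n, (b n).length = n := by
        intro n
        induction n with
        | zero => rfl
        | succ n ih => rw [hb, List.length_cons, ih]
      have hA : ∀ n i, i < n → P (b n) i = P (b (i + 1)) i := by
        intro n
        induction n with
        | zero => intro i hi; omega
        | succ n ih =>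
          intro i hi
          rcases Nat.lt_succ_iff_lt_or_eq.1 hi with h | h
          · rw [hb, hP, hbl, Function.update_of_ne h.ne, ih i h]
          · rw [h]
      have hw := hwin (fun n => (P (b (n + 1)) n : Set (Set X))) (fun n => Subtype.property _)
      have hy : y ∈ (Set.univ : Set X) := trivial
      rw [← hw.2] at hy
      obtain ⟨V, ⟨n, rfl⟩, hyV⟩ := hy
      have h1 : (fun i : Fin (n + 1) => (P (b ((i : ℕ) + 1)) (i : ℕ) : Set (Set X))) =
          fun i : Fin (n + 1) => (Function.update (P (b n)) n
            (C n (P (b n)) (k (b n))) (i : ℕ) : Set (Set X)) := by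
        funext i
        rw [← hA (n + 1) i i.2, hb, hP, hbl]
      have h2 := hk (b n)
      rw [hbl] at h2
      have h3 := hC n (P (b n)) (k (b n)) h2
      rw [← h1] at h3
      apply hky (b n)
      rw [← h3]
      exact hyV
    haveI : Countable (countableBasis X) := (countable_countableBasis X).to_subtype
    obtain ⟨e, he⟩ := exists_surjective_nat (List (countableBasis X))
    have hsel : ∀ (A : Set (Set X)) (n : ℕ), ∃ U : Set X, A ∈ openCovers X →
        U ∈ A ∧ x (e n).length (P (e n)) ∈ U := by
      intro A n
      by_cases h : A ∈ openCovers X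
      · have hm : x (e n).length (P (e n)) ∈ ⋃₀ A := by rw [h.2]; trivial
        obtain ⟨U, hU, hxU⟩ := hm
        exact ⟨U, fun _ => ⟨hU, hxU⟩⟩
      · exact ⟨∅, fun h' => absurd h' h⟩
    choose τ hτ using hsel
    refine ⟨τ, fun A hA n => (hτ A n hA).1, fun A hA => ⟨?_, ?_⟩⟩
    · rintro _ ⟨n, rfl⟩
      exact (hA n).1 _ (hτ (A n) n (hA n)).1
    · refine Set.eq_univ_of_forall fun y => ?_
      obtain ⟨l, hl⟩ := hD y
      obtain ⟨n, rfl⟩ := he l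
      have h := hτ (A n) n (hA n)
      exact ⟨_, ⟨n, rfl⟩, hl _ ((hA n).1 _ h.1) h.2⟩
  · rintro ⟨σ, hσ, hwin⟩
    exact ⟨fun n s => σ (s (Fin.last n)) n, fun n s hs => hσ _ (hs _) n,
      fun A hA => hwin A hA⟩
end
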